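/- arXiv:1304.7216 — 2 statements merged into one kernel-verified Lean document; each statement's English description precedes it below -/
import Mathlib

section
/- Let ℤ² denote the square lattice: the simple graph with vertex set ℤ × ℤ in which (a,b) and (c,d) are adjacent if and only if |a − c| + |b − d| = 1, and write σ_n = σ_n((0,0)). If σ_n^{1/n} → μ as n → ∞, then σ_{n+2}/σ_n → μ² as n → ∞. -/
open Filter

/-- The number of `n`-step self-avoiding walks in `G` starting at `v`. -/
noncomputable def sawCount {V : Type*} (G : SimpleGraph V) (v : V) (n : ℕ) : ℕ :=
  Nat.card {p : Σ w : V, G.Walk v w // p.2.IsPath ∧ p.2.length = n}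

/-- The square lattice `ℤ²`: vertex set `ℤ × ℤ`, with `(a,b)` and `(c,d)` adjacent iff
`|a − c| + |b − d| = 1`. -/
def squareLattice : SimpleGraph (ℤ × ℤ) :=
  SimpleGraph.fromRel (fun x y => |x.1 - y.1| + |x.2 - y.2| = 1)

namespace Kst

abbrev Pt := ℤ × ℤ

def A (p q : Pt) : Prop := |p.1 - q.1| + |p.2 - q.2| = 1

def dirs : Finset Pt := {(1, 0), (-1, 0), (0, 1), (0, -1)}

lemma mem_dirs (d : Pt) : d ∈ dirs ↔ |d.1| + |d.2| = 1 := by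
  obtain ⟨x, y⟩ := d
  simp only [dirs, Finset.mem_insert, Finset.mem_singleton, Prod.mk.injEq]
  rcases abs_cases x with h | h <;> rcases abs_cases y with h' | h' <;> omega

lemma A_iff (p q : Pt) : A p q ↔ q - p ∈ dirs := by
  rw [mem_dirs, A, abs_sub_comm p.1, abs_sub_comm p.2]; rfl

lemma A_symm {p q : Pt} (h : A p q) : A q p := by
  rw [A, abs_sub_comm q.1, abs_sub_comm q.2]; exact h

lemma A_ne {p q : Pt} (h : A p q) : p ≠ q := by
  rintro rfl; simp [A] at h

lemma adj_iff (p q : Pt) : squareLattice.Adj p q ↔ A p q := by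
  rw [squareLattice, SimpleGraph.fromRel_adj]
  constructor
  · rintro ⟨_, h | h⟩
    · exact h
    · exact A_symm h
  · intro h; exact ⟨A_ne h, Or.inl h⟩

structure IsSaw (n : ℕ) (w : ℕ → Pt) : Prop where
  zero : w 0 = (0, 0)
  adj : ∀ t, t < n → A (w t) (w (t + 1))
  inj : ∀ s t, s ≤ n → t ≤ n → w s = w t → s = t
  hfreeze : ∀ t, n ≤ t → w t = w n

/-- truncation -/
def trunc (n : ℕ) (w : ℕ → Pt) : ℕ → Pt := fun t => w (min t n)

lemma trunc_saw {n : ℕ} {w : ℕ → Pt} (h : IsSaw (n + 1) w) : IsSaw n (trunc n w) := by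
  refine ⟨by simp [trunc, h.zero], ?_, ?_, ?_⟩
  · intro t ht
    have := h.adj t (by omega)
    simpa [trunc, min_eq_left ht.le, min_eq_left (Nat.succ_le_of_lt ht)] using this
  · intro s t hs ht e
    simp only [trunc, min_eq_left hs, min_eq_left ht] at e
    exact h.inj s t (by omega) (by omega) e
  · intro t ht
    simp [trunc, ht]

lemma trunc_inj {n : ℕ} {w w' : ℕ → Pt} (h : IsSaw (n + 1) w) (h' : IsSaw (n + 1) w')
    (e : trunc n w = trunc n w') (e' : w (n + 1) = w' (n + 1)) : w = w' := by
  funext t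
  rcases Nat.lt_or_ge n t with ht | ht
  · rw [h.hfreeze t ht, h'.hfreeze t ht, e']
  · have := congrFun e t
    simpa [trunc, ht] using this

lemma saw_finite (n : ℕ) : {w | IsSaw n w}.Finite := by
  induction n with
  | zero =>
    apply Set.Finite.subset (Set.finite_singleton (fun _ => ((0, 0) : Pt)))
    intro w hw
    simp only [Set.mem_singleton_iff]
    funext t
    rw [hw.hfreeze t (Nat.zero_le _), hw.zero]
  | succ n ih =>
    have hf : ({w | IsSaw n w} ×ˢ (dirs : Set Pt)).Finite := ih.prod dirs.finite_toSet
    apply Set.Finite.of_finite_image (f := fun w => (trunc n w, w (n + 1) - w n))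
    · apply hf.subset
      rintro _ ⟨w, hw, rfl⟩
      exact ⟨trunc_saw hw, (A_iff _ _).1 (hw.adj n (by omega))⟩
    · intro w hw w' hw' e
      simp only [Prod.mk.injEq] at e
      apply trunc_inj hw hw' e.1
      have := congrFun e.1 n
      simp only [trunc, min_self] at this
      have h2 := e.2
      rw [this] at h2
      exact sub_left_injective h2

noncomputable def S (n : ℕ) : Finset (ℕ → Pt) := (saw_finite n).toFinset

lemma mem_S {n : ℕ} {w : ℕ → Pt} : w ∈ S n ↔ IsSaw n w := by simp [S]

lemma exists_walk (n : ℕ) : ∀ w : ℕ → Pt, (∀ t, t < n → A (w t) (w (t + 1))) →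
    ∃ p : squareLattice.Walk (w 0) (w n), p.length = n ∧ ∀ t, t ≤ n → p.getVert t = w t := by
  induction n with
  | zero => 
    intro w _
    exact ⟨SimpleGraph.Walk.nil, rfl, by intro t ht; obtain rfl : t = 0 := by omega
                                         simp⟩
  | succ n ih =>
    intro w h
    obtain ⟨p, hp, hp'⟩ := ih (fun t => w (t + 1)) (fun t ht => h (t + 1) (by omega))
    refine ⟨SimpleGraph.Walk.cons ((adj_iff _ _).2 (h 0 (by omega))) p, by simp [hp], ?_⟩
    intro t ht
    cases t with
    | zero => simp
    | succ t => simpa using hp' t (by omega)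

lemma sawCount_eq (n : ℕ) : sawCount squareLattice (0, 0) n = (S n).card := by
  rw [sawCount]
  have e : {p : Σ w : Pt, squareLattice.Walk (0, 0) w // p.2.IsPath ∧ p.2.length = n} ≃ S n := by
    refine Equiv.ofBijective (fun p => ⟨p.1.2.getVert, ?_⟩) ⟨?_, ?_⟩
    · obtain ⟨⟨v, p⟩, hp, rfl⟩ := p
      rw [mem_S]
      refine ⟨by simp, ?_, ?_, ?_⟩
      · intro t ht
        exact (adj_iff _ _).1 (p.adj_getVert_succ ht)
      · intro s t hs ht e
        exact hp.getVert_injOn hs ht e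
      · intro t ht
        simp only
        rw [p.getVert_of_length_le ht, p.getVert_length]
    · rintro ⟨⟨v, p⟩, hp, hl⟩ ⟨⟨v', p'⟩, hp', hl'⟩ e
      simp only [Subtype.mk.injEq] at e
      simp only at hl hl'
      have hv : v = v' := by
        rw [← p.getVert_length, ← p'.getVert_length, e, hl, hl']
      subst hv
      have : p = p' := SimpleGraph.Walk.ext_getVert (fun k => congrFun e k)
      subst this
      rfl
    · rintro ⟨w, hw⟩
      rw [mem_S] at hw
      obtain ⟨p, hl, hp⟩ := exists_walk n w hw.adj
      obtain ⟨h0, ha, hi, hs⟩ := hw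
      generalize hz : w 0 = z at p hp h0
      subst h0
      refine ⟨⟨⟨w n, p⟩, ?_, hl⟩, ?_⟩
      · rw [← SimpleGraph.Walk.IsPath.getVert_injOn_iff]
        intro s hs t ht e
        simp only [Set.mem_ofPred_eq, hl] at hs ht
        simp only at e
        rw [hp s hs, hp t ht] at e
        exact hi s t hs ht e
      · apply Subtype.ext
        funext t
        simp only
        rcases Nat.lt_or_ge n t with h | h
        · rw [hs t h.le, p.getVert_of_length_le (by omega)]
        · exact hp t h
  rw [Nat.card_congr e]
  simp

end Kst
namespace Kst

lemma det_lemma (a : ℕ → ℝ) (L D : ℝ) (hL : 0 < L) (hD : 0 < D) (ha : ∀ n, 0 < a n)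
    (hl : Tendsto (fun n : ℕ => Real.log (a n) / n) atTop (nhds L))
    (h : ∀ n : ℕ, 1 ≤ n → (a (n+2) / a n) ^ 2 - D / n ≤ a (n + 4) / a n) :
    Tendsto (fun n : ℕ => a (n + 2) / a n) atTop (nhds (Real.exp (2 * L))) := by
  set φ : ℕ → ℝ := fun n => a (n + 2) / a n with hφ
  have hφ0 : ∀ n, 0 < φ n := fun n => div_pos (ha _) (ha _)
  set ℓ : ℕ → ℝ := fun n => Real.log (a n) with hℓ
  have hlog : ∀ n, Real.log (φ n) = ℓ (n + 2) - ℓ n := fun n =>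
    Real.log_div (ha _).ne' (ha _).ne'
  -- g
  set g : ℕ → ℝ := fun n => max 0 (Real.log (φ n)) with hg
  have hstep : ∀ n : ℕ, 1 ≤ n → g n - D / n ≤ g (n + 2) := by
    intro n hn
    have hn' : (0 : ℝ) < n := by exact_mod_cast hn
    have hDn : 0 < D / n := by positivity
    simp only [hg]
    rcases le_total (Real.log (φ n)) 0 with h0 | h0
    · rw [max_eq_left h0]
      have := le_max_left 0 (Real.log (φ (n+2)))
      linarith
    · rw [max_eq_right h0]
      have h1 : 1 ≤ φ n := by
        by_contra hc
        have := Real.log_neg (hφ0 n) (not_le.1 hc)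
        linarith
      have h2 : φ n ^ 2 - D / n ≤ φ n * φ (n + 2) := by
        have := h n hn
        have e : φ n * φ (n + 2) = a (n + 4) / a n := by
          simp only [hφ]
          have := (ha (n+2)).ne'
          have := (ha n).ne'
          field_simp
        rw [e]; exact this
      have h3 : φ n - D / n ≤ φ (n + 2) := by
        by_contra hc
        push Not at hc
        nlinarith
      rcases le_total 1 (φ (n + 2)) with h4 | h4
      · have h5 : Real.log (φ n) - Real.log (φ (n+2)) ≤ φ n / φ (n+2) - 1 := by
          rw [← Real.log_div (hφ0 _).ne' (hφ0 _).ne']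
          exact Real.log_le_sub_one_of_pos (div_pos (hφ0 _) (hφ0 _))
        have h6 : φ n / φ (n+2) - 1 ≤ D / n := by
          rw [div_sub_one (hφ0 _).ne', div_le_iff₀ (hφ0 _)]
          nlinarith
        have := le_max_right 0 (Real.log (φ (n+2)))
        linarith
      · have h5 := Real.log_le_sub_one_of_pos (hφ0 n)
        have := le_max_left 0 (Real.log (φ (n+2)))
        linarith
  have hmulti : ∀ (n : ℕ), 1 ≤ n → ∀ i : ℕ, g n - i * (D / n) ≤ g (n + 2 * i) := by
    intro n hn i
    induction i with
    | zero => simp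
    | succ i ih =>
      have h1 := hstep (n + 2 * i) (by omega)
      have hn' : (0 : ℝ) < n := by exact_mod_cast hn
      have h2 : D / ((n + 2 * i : ℕ) : ℝ) ≤ D / n := by
        apply div_le_div_of_nonneg_left hD.le hn'
        push_cast; linarith [show (0:ℝ) ≤ i from Nat.cast_nonneg i]
      rw [show n + 2 * (i + 1) = n + 2 * i + 2 by ring]
      push_cast
      linarith
  have hsum : ∀ n k : ℕ, ℓ (n + 2 * k) - ℓ n = ∑ i ∈ Finset.range k, Real.log (φ (n + 2 * i)) := by
    intro n k
    induction k with
    | zero => simp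
    | succ k ih =>
      rw [Finset.sum_range_succ, ← ih, hlog, show n + 2 * (k + 1) = n + 2 * k + 2 by ring]
      ring
  have hbd : ∀ η : ℝ, 0 < η → ∃ N : ℕ, 1 ≤ N ∧ ∀ n : ℕ, N ≤ n → |ℓ n - L * n| ≤ η * n := by
    intro η hη
    rw [Metric.tendsto_atTop] at hl
    obtain ⟨N, hN⟩ := hl η hη
    refine ⟨max N 1, le_max_right _ _, fun n hn => ?_⟩
    have h1 := hN n (le_trans (le_max_left _ _) hn)
    have hn' : (0 : ℝ) < n := by exact_mod_cast (le_trans (le_max_right _ _) hn)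
    rw [Real.dist_eq] at h1
    have e : ℓ n - L * n = (Real.log (a n) / n - L) * n := by
      simp only [hℓ]; field_simp
    rw [e, abs_mul, abs_of_pos hn']
    exact mul_le_mul_of_nonneg_right h1.le hn'.le
  have hg_lim : Tendsto g atTop (nhds (2 * L)) := by
    rw [Metric.tendsto_atTop]
    intro ε hε
    -- δ = min 1/4 (ε/(8D)) 
    obtain ⟨δ, hδ0, hδ1, hδ2⟩ : ∃ δ : ℝ, 0 < δ ∧ δ ≤ 1/4 ∧ δ * (2 * D) ≤ ε / 2 := by
      refine ⟨min (1/4) (ε / (4 * D)), by positivity, min_le_left _ _, ?_⟩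
      calc _ ≤ ε / (4 * D) * (2 * D) := by gcongr; exact min_le_right _ _
        _ = ε / 2 := by field_simp; ring
    obtain ⟨N, hN1, hN⟩ := hbd (ε * δ / 32) (by positivity)
    obtain ⟨M, hM⟩ := exists_nat_gt (2 / δ)
    refine ⟨2 * N + M, fun n hn => ?_⟩
    have hnN : N ≤ n := by omega
    have hn1 : 1 ≤ n := by omega
    have hn' : (0 : ℝ) < n := by exact_mod_cast hn1
    set k : ℕ := ⌊δ * n⌋₊ with hk
    have hk1 : (k : ℝ) ≤ δ * n := Nat.floor_le (by positivity)
    have hk2 : δ * n < k + 1 := Nat.lt_floor_add_one _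
    have hMn : (M : ℝ) ≤ n := by exact_mod_cast (by omega : M ≤ n)
    have hδn : 2 < δ * n := by
      have : 2 / δ < n := lt_of_lt_of_le hM hMn
      rwa [div_lt_iff₀ hδ0, mul_comm] at this
    have hk3 : δ * n / 2 < k := by linarith
    have hk0 : (0 : ℝ) < k := by linarith
    have hk4 : 4 * k ≤ n := by
      have : (4 : ℝ) * k ≤ n := by nlinarith
      exact_mod_cast this
    have hkn : (k : ℝ) ≤ n / 4 := by
      have : ((4 * k : ℕ) : ℝ) ≤ n := by exact_mod_cast hk4
      push_cast at this; linarith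
    rw [Real.dist_eq, abs_sub_lt_iff]
    constructor
    · by_contra hc
      push Not at hc
      have h1 : ∀ i ∈ Finset.range k, 2 * L + ε / 2 ≤ Real.log (φ (n + 2 * i)) := by
        intro i hi
        rw [Finset.mem_range] at hi
        have h2 := hmulti n hn1 i
        have h3 : (i : ℝ) * (D / n) ≤ ε / 2 := by
          have : (i : ℝ) ≤ δ * n := le_trans (by exact_mod_cast hi.le) hk1
          calc (i : ℝ) * (D / n) ≤ δ * n * (D / n) := by gcongr
            _ = δ * D := by field_simp
            _ ≤ ε / 2 := by nlinarith
        have h4 : 2 * L + ε / 2 ≤ g (n + 2 * i) := by linarith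
        simp only [hg] at h4
        rcases le_max_iff.1 h4 with h5 | h5
        · linarith
        · exact h5
      have h2 := Finset.card_nsmul_le_sum _ _ _ h1
      rw [← hsum, Finset.card_range, nsmul_eq_mul] at h2
      have h3 := abs_le.1 (hN n hnN)
      have h4 := abs_le.1 (hN (n + 2 * k) (by omega))
      push_cast at h4
      have h5 : (k : ℝ) * (ε / 2) ≤ ε * δ / 32 * (2 * n + 2 * k) := by
        nlinarith [h3.1, h3.2, h4.1, h4.2]
      have h6 : ε * δ / 32 * (2 * n + 2 * k) ≤ ε * δ / 32 * (3 * n) := by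
        gcongr; linarith
      have h7 : δ * n / 2 * (ε / 2) < k * (ε / 2) := by gcongr
      have : 0 < ε * δ * n := by positivity
      nlinarith
    · by_contra hc
      push Not at hc
      obtain ⟨m, hm⟩ : ∃ m, n = m + 2 * k := ⟨n - 2 * k, by omega⟩
      have hmn : (m : ℝ) = n - 2 * k := by rw [hm]; push_cast; ring
      have hm1 : 1 ≤ m := by omega
      have hm2 : (n : ℝ) / 2 ≤ m := by linarith
      have hm0 : (0 : ℝ) < m := by exact_mod_cast hm1
      have h1 : ∀ i ∈ Finset.range k, Real.log (φ (m + 2 * i)) ≤ 2 * L - ε / 2 := by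
        intro i hi
        rw [Finset.mem_range] at hi
        have h2 := hmulti (m + 2 * i) (by omega) (k - i)
        rw [show m + 2 * i + 2 * (k - i) = n by omega] at h2
        have h3 : ((k - i : ℕ) : ℝ) * (D / (m + 2 * i : ℕ)) ≤ ε / 2 := by
          have : ((k - i : ℕ) : ℝ) ≤ δ * n := le_trans (by exact_mod_cast Nat.sub_le _ _) hk1
          have h5 : (n : ℝ) / 2 ≤ ((m + 2 * i : ℕ) : ℝ) := by
            push_cast; linarith [show (0:ℝ) ≤ i from Nat.cast_nonneg i]
          calc ((k - i : ℕ) : ℝ) * (D / (m + 2 * i : ℕ)) ≤ δ * n * (D / (n / 2)) := by gcongr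
            _ = δ * (2 * D) := by field_simp
            _ ≤ ε / 2 := hδ2
        have h4 : g (m + 2 * i) ≤ 2 * L - ε / 2 := by linarith
        exact le_trans (le_max_right _ _) h4
      have h2 := Finset.sum_le_card_nsmul _ _ _ h1
      rw [← hsum, Finset.card_range, nsmul_eq_mul, ← hm] at h2
      have h3 := abs_le.1 (hN n hnN)
      have h4 := abs_le.1 (hN m (by omega))
      have h5 : (k : ℝ) * (ε / 2) ≤ ε * δ / 32 * (n + m) := by
        rw [hmn] at h4 ⊢
        nlinarith [h3.1, h3.2, h4.1, h4.2]
      have h6 : ε * δ / 32 * (n + m) ≤ ε * δ / 32 * (3 * n) := by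
        gcongr; linarith
      have h7 : δ * n / 2 * (ε / 2) < k * (ε / 2) := by gcongr
      have : 0 < ε * δ * n := by positivity
      nlinarith
  have h1 : Tendsto (fun n => Real.exp (g n)) atTop (nhds (Real.exp (2 * L))) :=
    (Real.continuous_exp.tendsto _).comp hg_lim
  apply h1.congr'
  have h2 : ∀ᶠ n in atTop, 0 < g n := hg_lim.eventually (lt_mem_nhds (by linarith))
  filter_upwards [h2] with n hn
  simp only [hg] at hn ⊢
  have : 0 < Real.log (φ n) := by
    rcases lt_max_iff.1 hn with h | h
    · exact absurd h (lt_irrefl _)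
    · exact h
  rw [max_eq_right this.le, Real.exp_log (hφ0 n)]

end Kst
namespace Kst
set_option linter.unusedSimpArgs false
open Classical in
/-- SAWs of length `n` avoiding `F` after time zero -/
noncomputable def T (F : Pt → Prop) (n : ℕ) : Finset (ℕ → Pt) :=
  (S n).filter (fun w => ∀ t, 1 ≤ t → t ≤ n → ¬ F (w t))

lemma mem_T {F : Pt → Prop} {n : ℕ} {w : ℕ → Pt} :
    w ∈ T F n ↔ IsSaw n w ∧ ∀ t, 1 ≤ t → t ≤ n → ¬ F (w t) := by
  simp [T, mem_S]

def pre (d : Pt) (w : ℕ → Pt) : ℕ → Pt := fun t => if t = 0 then (0, 0) else d + w (t - 1)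

lemma pre_succ (d : Pt) (w : ℕ → Pt) (t : ℕ) : pre d w (t + 1) = d + w t := by simp [pre]

lemma pre_zero (d : Pt) (w : ℕ → Pt) : pre d w 0 = (0, 0) := by simp [pre]

lemma pre_injective (d : Pt) : Function.Injective (pre d) := by
  intro w w' e
  funext t
  have := congrFun e (t + 1)
  rw [pre_succ, pre_succ] at this
  exact add_left_cancel this

lemma pre_mem {F F' : Pt → Prop} {d : Pt} {n : ℕ} {w : ℕ → Pt} (hd : d ∈ dirs) (hF : ¬ F d)
    (hFF : ∀ p, F (d + p) ∨ d + p = 0 → F' p) (hw : w ∈ T F' n) : pre d w ∈ T F (n + 1) := by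
  rw [mem_T] at hw ⊢
  obtain ⟨hw, hw'⟩ := hw
  have hd0 : d ≠ 0 := by rintro rfl; revert hd; decide
  have key : ∀ t, t ≤ n → ¬ (F (d + w t) ∨ d + w t = 0) := by
    intro t ht
    rcases Nat.eq_zero_or_pos t with rfl | h
    · rw [hw.zero]
      change ¬ (F (d + 0) ∨ d + 0 = 0)
      rw [add_zero]
      tauto
    · exact fun h1 => hw' t h ht (hFF _ h1)
  refine ⟨⟨pre_zero _ _, ?_, ?_, ?_⟩, ?_⟩
  · intro t ht
    cases t with
    | zero =>
      rw [pre_zero, pre_succ, hw.zero, A_iff]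
      change d + 0 - 0 ∈ dirs
      simpa using hd
    | succ t =>
      rw [pre_succ, pre_succ, A_iff]
      have := (A_iff _ _).1 (hw.adj t (by omega))
      simpa using this
  · intro s t hs ht e
    cases s with
    | zero =>
      cases t with
      | zero => rfl
      | succ t =>
        rw [pre_zero, pre_succ] at e
        exact absurd (Or.inr e.symm) (key t (by omega))
    | succ s =>
      cases t with
      | zero =>
        rw [pre_zero, pre_succ] at e
        exact absurd (Or.inr e) (key s (by omega))
      | succ t =>
        rw [pre_succ, pre_succ] at e
        rw [hw.inj s t (by omega) (by omega) (add_left_cancel e)]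
  · intro t ht
    obtain ⟨t, rfl⟩ : ∃ s, t = s + 1 := ⟨t - 1, by omega⟩
    rw [pre_succ, pre_succ, hw.hfreeze t (by omega)]
  · intro t ht ht'
    obtain ⟨t, rfl⟩ : ∃ s, t = s + 1 := ⟨t - 1, by omega⟩
    rw [pre_succ]
    exact fun h => key t (by omega) (Or.inl h)

/-- several transitions -/
lemma T_step (F : Pt → Prop) (n : ℕ) (D : Finset Pt) (F' : Pt → Pt → Prop) (hD : D ⊆ dirs)
    (hF : ∀ d ∈ D, ¬ F d) (hFF : ∀ d ∈ D, ∀ p, F (d + p) ∨ d + p = 0 → F' d p) :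
    ∑ d ∈ D, (T (F' d) n).card ≤ (T F (n + 1)).card := by
  classical
  have : (D.biUnion (fun d => (T (F' d) n).image (pre d))).card =
      ∑ d ∈ D, (T (F' d) n).card := by
    rw [Finset.card_biUnion]
    · apply Finset.sum_congr rfl
      intro d _
      exact Finset.card_image_of_injective _ (pre_injective d)
    · intro d _ d' _ hne
      change Disjoint _ _
      rw [Finset.disjoint_left]
      intro x hx hx'
      rw [Finset.mem_image] at hx hx'
      obtain ⟨w, hw, rfl⟩ := hx
      obtain ⟨w', hw', e⟩ := hx'
      have := congrFun e 1
      rw [show (1 : ℕ) = 0 + 1 from rfl, pre_succ, pre_succ, (mem_T.1 hw).1.zero,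
        (mem_T.1 hw').1.zero] at this
      exact hne (add_right_cancel this).symm
  rw [← this]
  apply Finset.card_le_card
  intro x hx
  rw [Finset.mem_biUnion] at hx
  obtain ⟨d, hd, hx⟩ := hx
  rw [Finset.mem_image] at hx
  obtain ⟨w, hw, rfl⟩ := hx
  exact pre_mem (hD hd) (hF d hd) (hFF d hd) hw

def refl (F : Pt → Prop) : Pt → Prop := fun p => F (p.1, - p.2)

lemma T_refl (F : Pt → Prop) (n : ℕ) : (T F n).card ≤ (T (refl F) n).card := by
  apply Finset.card_le_card_of_injOn (fun w t => ((w t).1, - (w t).2))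
  · intro w hw
    rw [Finset.mem_coe, mem_T] at hw ⊢
    obtain ⟨hw, hw'⟩ := hw
    refine ⟨⟨by simp [hw.zero], ?_, ?_, ?_⟩, ?_⟩
    · intro t ht
      have := hw.adj t ht
      simp only [A] at this ⊢
      rw [← this, ← abs_neg ((w t).2 - (w (t+1)).2)]
      congr 2; ring
    · intro s t hs ht e
      apply hw.inj s t hs ht
      simp only [Prod.mk.injEq, neg_inj] at e
      exact Prod.ext e.1 e.2
    · intro t ht
      simp only [hw.hfreeze t ht]
    · intro t h1 h2
      simpa [refl] using hw' t h1 h2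
  · intro w _ w' _ e
    funext t
    have := congrFun e t
    simp only [Prod.mk.injEq, neg_inj] at this
    exact Prod.ext this.1 this.2

def fP : Pt → Prop := fun p => p.1 < -1 ∨ (p.1 = -1 ∧ p.2 ≤ 0)
def fA' : Pt → Prop := fun p => p.1 < -1 ∨ (p.1 = -1 ∧ p.2 < 0) ∨ (p.1 = 0 ∧ p.2 < 0)
def fA : Pt → Prop := fun p => p.1 < -1 ∨ (p.1 = -1 ∧ p.2 ≤ 0) ∨ (p.1 = 0 ∧ p.2 < 0)
def fW : Pt → Prop := fun p => p.1 < 0 ∨ (p.1 = 0 ∧ p.2 < 0) ∨ (p.1 = 1 ∧ p.2 ≤ 0)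
def fV : Pt → Prop := fun p => p.1 < 0 ∨ (p.1 = 0 ∧ p.2 < 0) ∨ (p.1 = 1 ∧ p.2 < 0)
def fB : Pt → Prop := fun p => p.1 < 0 ∨ (p.1 = 0 ∧ p.2 < 0)

lemma T_step1 (F F1 : Pt → Prop) (n : ℕ) (d1 : Pt) (hD : d1 ∈ dirs) (hF : ¬ F d1)
    (hFF : ∀ p, F (d1 + p) ∨ d1 + p = 0 → F1 p) :
    (T F1 n).card ≤ (T F (n + 1)).card := by
  have := T_step F n {d1} (fun _ => F1) (by simpa using hD) (by simpa using hF) (by simpa using hFF)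
  simpa using this

lemma T_step2 (F F1 F2 : Pt → Prop) (n : ℕ) (d1 d2 : Pt) (hne : d1 ≠ d2)
    (hD1 : d1 ∈ dirs) (hD2 : d2 ∈ dirs) (hF1 : ¬ F d1) (hF2 : ¬ F d2)
    (hFF1 : ∀ p, F (d1 + p) ∨ d1 + p = 0 → F1 p)
    (hFF2 : ∀ p, F (d2 + p) ∨ d2 + p = 0 → F2 p) :
    (T F1 n).card + (T F2 n).card ≤ (T F (n + 1)).card := by
  have := T_step F n {d1, d2} (fun d => if d = d1 then F1 else F2)
    (by intro x; simp; rintro (rfl | rfl) <;> assumption)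
    (by intro x; simp; rintro (rfl | rfl) <;> assumption)
    (by intro x; simp only [Finset.mem_insert, Finset.mem_singleton]; rintro (rfl | rfl) 
        · simpa using hFF1
        · simpa [hne.symm] using hFF2)
  rw [Finset.sum_pair hne] at this
  simpa [hne.symm] using this

lemma T_step3 (F F1 F2 F3 : Pt → Prop) (n : ℕ) (d1 d2 d3 : Pt) (hne : d1 ≠ d2) (hne' : d1 ≠ d3)
    (hne2 : d2 ≠ d3)
    (hD1 : d1 ∈ dirs) (hD2 : d2 ∈ dirs) (hD3 : d3 ∈ dirs) (hF1 : ¬ F d1) (hF2 : ¬ F d2)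
    (hF3 : ¬ F d3)
    (hFF1 : ∀ p, F (d1 + p) ∨ d1 + p = 0 → F1 p)
    (hFF2 : ∀ p, F (d2 + p) ∨ d2 + p = 0 → F2 p)
    (hFF3 : ∀ p, F (d3 + p) ∨ d3 + p = 0 → F3 p) :
    (T F1 n).card + (T F2 n).card + (T F3 n).card ≤ (T F (n + 1)).card := by
  have := T_step F n {d1, d2, d3} (fun d => if d = d1 then F1 else if d = d2 then F2 else F3)
    (by intro x; simp; rintro (rfl | rfl | rfl) <;> assumption)
    (by intro x; simp; rintro (rfl | rfl | rfl) <;> assumption)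
    (by intro x; simp only [Finset.mem_insert, Finset.mem_singleton]; rintro (rfl | rfl | rfl) 
        · simpa using hFF1
        · simpa [hne.symm] using hFF2
        · simpa [hne'.symm, hne2.symm] using hFF3)
  rw [Finset.sum_insert (by simp [hne, hne']), Finset.sum_pair hne2] at this
  simpa [hne.symm, hne'.symm, hne2.symm, add_assoc] using this

lemma stepP (n : ℕ) : (T fP n).card + (T fA' n).card + (T fB n).card ≤ (T fP (n+1)).card := by
  have := T_step3 fP fP fA' (refl fB) n (1,0) (0,1) (0,-1) (by decide) (by decide) (by decide)
    (by decide) (by decide) (by decide) (by simp [fP]) (by simp [fP]) (by simp [fP])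
    (by rintro ⟨x, y⟩; simp [fP, refl, fB, fA']; omega)
    (by rintro ⟨x, y⟩; simp [fP, refl, fB, fA']; omega)
    (by rintro ⟨x, y⟩; simp [fP, refl, fB, fA']; omega)
  have h2 := T_refl fB n
  omega

lemma stepA' (n : ℕ) : (T fA' n).card + (T fP n).card + (T fW n).card ≤ (T fA' (n+1)).card :=
  T_step3 fA' fA' fP fW n (0,1) (1,0) (-1,0) (by decide) (by decide) (by decide)
    (by decide) (by decide) (by decide) (by simp [fA']) (by simp [fA']) (by simp [fA'])
    (by rintro ⟨x, y⟩; simp [fP, fW, fA']; omega)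
    (by rintro ⟨x, y⟩; simp [fP, fW, fA']; omega)
    (by rintro ⟨x, y⟩; simp [fP, fW, fA']; omega)

lemma stepW (n : ℕ) : (T fV n).card ≤ (T fW (n+1)).card :=
  T_step1 fW fV n (0,1) (by decide) (by simp [fW])
    (by rintro ⟨x, y⟩; simp [fV, fW]; omega)

lemma stepV (n : ℕ) : (T fV n).card + (T fA n).card ≤ (T fV (n+1)).card :=
  T_step2 fV fV fA n (0,1) (1,0) (by decide) (by decide) (by decide) (by simp [fV]) (by simp [fV])
    (by rintro ⟨x, y⟩; simp [fV, fA]; omega)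
    (by rintro ⟨x, y⟩; simp [fV, fA]; omega)

lemma stepA (n : ℕ) : (T fA' n).card + (T fP n).card ≤ (T fA (n+1)).card :=
  T_step2 fA fA' fP n (0,1) (1,0) (by decide) (by decide) (by decide) (by simp [fA]) (by simp [fA])
    (by rintro ⟨x, y⟩; simp [fA', fA]; omega)
    (by rintro ⟨x, y⟩; simp [fP, fA]; omega)

lemma stepB (n : ℕ) : (T fB n).card + (T fP n).card ≤ (T fB (n+1)).card :=
  T_step2 fB fB fP n (0,1) (1,0) (by decide) (by decide) (by decide) (by simp [fB]) (by simp [fB])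
    (by rintro ⟨x, y⟩; simp [fB]; omega)
    (by rintro ⟨x, y⟩; simp [fP, fB]; omega)

lemma T_zero (F : Pt → Prop) : 1 ≤ (T F 0).card := by
  rw [Nat.one_le_iff_ne_zero, ← Nat.pos_iff_ne_zero, Finset.card_pos]
  refine ⟨fun _ => (0, 0), mem_T.2 ⟨⟨rfl, by omega, by omega, by simp⟩, by omega⟩⟩

lemma lower_aux (n : ℕ) :
    (1.265 : ℝ) * 2.47 ^ n ≤ 1.265 * (T fP n).card ∧ (1 : ℝ) * 2.47 ^ n ≤ 1.265 * (T fA' n).card ∧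
    (0.86 : ℝ) * 2.47 ^ n ≤ 1.265 * (T fB n).card ∧ (0.917 : ℝ) * 2.47 ^ n ≤ 1.265 * (T fA n).card ∧
    (0.623 : ℝ) * 2.47 ^ n ≤ 1.265 * (T fV n).card ∧
    (0.252 : ℝ) * 2.47 ^ n ≤ 1.265 * (T fW n).card := by
  induction n with
  | zero =>
    have h : ∀ F, (1 : ℝ) ≤ (T F 0).card := fun F => by exact_mod_cast T_zero F
    have h1 := h fP; have h2 := h fA'; have h3 := h fB; have h4 := h fA; have h5 := h fV
    have h6 := h fW
    refine ⟨?_, ?_, ?_, ?_, ?_, ?_⟩ <;> rw [pow_zero] <;> linarith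
  | succ n ih =>
    obtain ⟨h1, h2, h3, h4, h5, h6⟩ := ih
    have e1 : ((T fP n).card : ℝ) + (T fA' n).card + (T fB n).card ≤ (T fP (n+1)).card := by
      exact_mod_cast stepP n
    have e2 : ((T fA' n).card : ℝ) + (T fP n).card + (T fW n).card ≤ (T fA' (n+1)).card := by
      exact_mod_cast stepA' n
    have e3 : ((T fB n).card : ℝ) + (T fP n).card ≤ (T fB (n+1)).card := by
      exact_mod_cast stepB n
    have e4 : ((T fA' n).card : ℝ) + (T fP n).card ≤ (T fA (n+1)).card := by
      exact_mod_cast stepA n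
    have e5 : ((T fV n).card : ℝ) + (T fA n).card ≤ (T fV (n+1)).card := by
      exact_mod_cast stepV n
    have e6 : ((T fV n).card : ℝ) ≤ (T fW (n+1)).card := by
      exact_mod_cast stepW n
    have hp : (0 : ℝ) < 2.47 ^ n := by positivity
    rw [pow_succ]
    generalize (2.47 : ℝ) ^ n = z at *
    refine ⟨?_, ?_, ?_, ?_, ?_, ?_⟩ <;> linarith

lemma lower (n : ℕ) : (2.47 : ℝ) ^ n ≤ (S n).card := by
  have h := (lower_aux n).1
  have h2 : ((T fP n).card : ℝ) ≤ (S n).card := by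
    exact_mod_cast Finset.card_le_card (fun w hw => mem_S.2 (mem_T.1 hw).1)
  linarith

end Kst
namespace Kst

open Classical in
/-- positions of U-turns -/
noncomputable def J (n : ℕ) (w : ℕ → Pt) : Finset ℕ :=
  (Finset.range n).filter (fun t => t + 3 ≤ n ∧ A (w t) (w (t + 3)))

lemma mem_J {n : ℕ} {w : ℕ → Pt} {t : ℕ} : t ∈ J n w ↔ t + 3 ≤ n ∧ A (w t) (w (t + 3)) := by
  simp only [J, Finset.mem_filter, Finset.mem_range]
  constructor
  · exact fun h => h.2
  · exact fun h => ⟨by omega, h⟩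

noncomputable def wt (d1 d2 : Pt) : ℝ := if d1 = d2 then 1 else 0.72

noncomputable def Phi (n : ℕ) (w : ℕ → Pt) : ℝ :=
  (0.05 : ℝ) ^ (J (n + 2) w).card * wt (w (n + 1) - w n) (w (n + 2) - w (n + 1))

lemma wt_pos (d1 d2 : Pt) : 0 < wt d1 d2 := by
  unfold wt; split_ifs <;> norm_num

open Classical in
lemma J_succ {n : ℕ} (w : ℕ → Pt) : (J (n + 3) w).card =
    (J (n + 2) (trunc (n + 2) w)).card + if A (w n) (w (n + 3)) then 1 else 0 := by
  have e : ∀ t, t < n → (t ∈ J (n + 3) w ↔ t ∈ J (n + 2) (trunc (n + 2) w)) := by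
    intro t ht
    rw [mem_J, mem_J]
    simp only [trunc]
    rw [min_eq_left (by omega), min_eq_left (by omega)]
    constructor
    · exact fun h => ⟨by omega, h.2⟩
    · exact fun h => ⟨by omega, h.2⟩
  have hn : n ∉ J (n + 2) (trunc (n + 2) w) := by rw [mem_J]; omega
  by_cases h : A (w n) (w (n + 3))
  · rw [if_pos h, ← Finset.card_insert_of_notMem hn]
    congr 1
    ext t
    rw [Finset.mem_insert]
    rcases lt_trichotomy t n with ht | rfl | ht
    · rw [e t ht]; simp [ht.ne]
    · simp only [true_or, iff_true]; rw [mem_J]; exact ⟨le_rfl, h⟩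
    · rw [mem_J, mem_J]; omega
  · rw [if_neg h, add_zero]
    congr 1
    ext t
    rcases lt_trichotomy t n with ht | rfl | ht
    · rw [e t ht]
    · simp only [hn, iff_false]; rw [mem_J]; exact fun h' => h h'.2
    · rw [mem_J, mem_J]; omega

lemma finite_check : ∀ d1 ∈ dirs, ∀ d2 ∈ dirs, d1 + d2 ≠ 0 →
    ∑ d3 ∈ dirs.filter (fun d3 => d2 + d3 ≠ 0),
      (if d1 + d2 + d3 ∈ dirs then (0.05 : ℝ) else 1) * wt d2 d3 ≤ 2.44 * wt d1 d2 := by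
  intro d1 h1 d2 h2 h
  rw [Finset.sum_filter]
  simp only [dirs, Finset.mem_insert, Finset.mem_singleton] at h1 h2
  have hz : (0 : Pt) = (0, 0) := rfl
  rw [hz] at *
  rcases h1 with rfl | rfl | rfl | rfl <;> rcases h2 with rfl | rfl | rfl | rfl <;>
    first
    | exact absurd (by decide) h
    | (simp [dirs, wt, Finset.sum_insert]; try norm_num)

lemma fiber_bound {n : ℕ} {w : ℕ → Pt} (hw : IsSaw (n + 2) w) [DecidableEq (ℕ → Pt)] :
    ∑ w' ∈ (S (n + 3)).filter (fun w' => trunc (n + 2) w' = w), Phi (n + 1) w' ≤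
      2.44 * Phi n w := by
  classical
  set d1 := w (n + 1) - w n with hd1
  set d2 := w (n + 2) - w (n + 1) with hd2
  have m1 : d1 ∈ dirs := (A_iff _ _).1 (hw.adj n (by omega))
  have m2 : d2 ∈ dirs := (A_iff _ _).1 (hw.adj (n + 1) (by omega))
  have m3 : d1 + d2 ≠ 0 := by
    intro h
    have : w (n + 2) = w n := by
      rw [← sub_eq_zero, ← h, hd1, hd2]; abel
    have := hw.inj _ _ (by omega) (by omega) this
    omega
  have key := finite_check d1 m1 d2 m2 m3
  have hpos : (0 : ℝ) ≤ 0.05 ^ (J (n + 2) w).card := by positivity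
  have hval : ∀ w' ∈ (S (n + 3)).filter (fun w' => trunc (n + 2) w' = w),
      Phi (n + 1) w' = 0.05 ^ (J (n + 2) w).card * ((fun d3 =>
        (if d1 + d2 + d3 ∈ dirs then (0.05 : ℝ) else 1) * wt d2 d3) (w' (n + 3) - w' (n + 2))) ∧
      w' (n + 3) - w' (n + 2) ∈ dirs.filter (fun d3 => d2 + d3 ≠ 0) := by
    intro w' h
    rw [Finset.mem_filter, mem_S] at h
    obtain ⟨h, ht⟩ := h
    have ev : ∀ t, t ≤ n + 2 → w' t = w t := by
      intro t h'
      rw [← ht]; simp [trunc, h']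
    constructor
    · unfold Phi
      rw [show n + 1 + 2 = n + 3 by ring, show n + 1 + 1 = n + 2 by ring, J_succ, ht, pow_add]
      have : d1 + d2 + (w' (n + 3) - w' (n + 2)) = w' (n + 3) - w' n := by
        rw [hd1, hd2, ev (n+2) le_rfl, ev n (by omega)]; abel
      simp only [this, A_iff]
      rw [ev (n + 2) le_rfl, ev (n + 1) (by omega)]
      split_ifs <;> simp [mul_assoc, hd2]
    · rw [Finset.mem_filter]
      refine ⟨(A_iff _ _).1 (h.adj (n + 2) (by omega)), ?_⟩
      intro hz
      have : w' (n + 3) = w' (n + 1) := by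
        rw [← sub_eq_zero, ← hz, hd2, ev (n+2) le_rfl, ev (n+1) (by omega)]; abel
      have := h.inj _ _ (by omega) (by omega) this
      omega
  calc ∑ w' ∈ (S (n + 3)).filter (fun w' => trunc (n + 2) w' = w), Phi (n + 1) w'
      = ∑ w' ∈ (S (n + 3)).filter (fun w' => trunc (n + 2) w' = w),
        0.05 ^ (J (n + 2) w).card * ((fun d3 =>
        (if d1 + d2 + d3 ∈ dirs then (0.05 : ℝ) else 1) * wt d2 d3) (w' (n + 3) - w' (n + 2))) :=
        Finset.sum_congr rfl (fun w' h => (hval w' h).1)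
    _ = 0.05 ^ (J (n + 2) w).card * ∑ d3 ∈ ((S (n + 3)).filter
        (fun w' => trunc (n + 2) w' = w)).image (fun w' => w' (n + 3) - w' (n + 2)),
        (if d1 + d2 + d3 ∈ dirs then (0.05 : ℝ) else 1) * wt d2 d3 := by
        rw [Finset.sum_image, Finset.mul_sum]
        intro a ha b hb e
        simp only [Finset.coe_filter, Set.mem_ofPred_eq, mem_S] at ha hb
        apply trunc_inj ha.1 hb.1 (ha.2.trans hb.2.symm)
        have h2 : a (n + 2) = b (n + 2) := by
          have := congrFun (ha.2.trans hb.2.symm) (n + 2)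
          simpa [trunc] using this
        simp only [h2] at e
        exact sub_left_injective e
    _ ≤ 0.05 ^ (J (n + 2) w).card * ∑ d3 ∈ dirs.filter (fun d3 => d2 + d3 ≠ 0),
        (if d1 + d2 + d3 ∈ dirs then (0.05 : ℝ) else 1) * wt d2 d3 := by
        refine mul_le_mul_of_nonneg_left ?_ hpos
        apply Finset.sum_le_sum_of_subset_of_nonneg
        · intro d hd
          rw [Finset.mem_image] at hd
          obtain ⟨w', h, rfl⟩ := hd
          exact (hval w' h).2
        · intro d _ _
          have := wt_pos d2 d
          split_ifs <;> positivity
    _ ≤ 0.05 ^ (J (n + 2) w).card * (2.44 * wt d1 d2) := by gcongr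
    _ = 2.44 * Phi n w := by unfold Phi; ring

lemma sum_Phi (n : ℕ) : ∑ w ∈ S (n + 2), Phi n w ≤ 2.44 ^ n * ∑ w ∈ S 2, Phi 0 w := by
  classical
  induction n with
  | zero => simp
  | succ n ih =>
    rw [← Finset.sum_fiberwise_of_maps_to (t := S (n + 2)) (g := trunc (n + 2))
      (fun w hw => mem_S.2 (trunc_saw (mem_S.1 hw)))]
    calc _ ≤ ∑ w ∈ S (n + 2), 2.44 * Phi n w :=
          Finset.sum_le_sum (fun w hw => fiber_bound (mem_S.1 hw))
      _ ≤ 2.44 ^ (n + 1) * ∑ w ∈ S 2, Phi 0 w := by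
        rw [← Finset.mul_sum, pow_succ]; linarith

open Classical in
noncomputable def good (n : ℕ) : Finset (ℕ → Pt) := (S n).filter (fun w => n ≤ 300 * (J n w).card)

open Classical in
noncomputable def bad (n : ℕ) : Finset (ℕ → Pt) := (S n).filter (fun w => ¬ n ≤ 300 * (J n w).card)

lemma good_add_bad (n : ℕ) : (good n).card + (bad n).card = (S n).card :=
  Finset.card_filter_add_card_filter_not _

lemma bad_bound : ∃ K : ℝ, 0 < K ∧ ∀ n : ℕ, ((bad (n + 2)).card : ℝ) ≤ K * 2.467 ^ n := by
  have hQ : 0 ≤ ∑ w ∈ S 2, Phi 0 w :=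
    Finset.sum_nonneg (fun w _ => by unfold Phi; have := wt_pos (w (0 + 1) - w 0) (w (0 + 2) - w (0 + 1)); positivity)
  refine ⟨(∑ w ∈ S 2, Phi 0 w) * 1.011 ^ 2 / 0.72 + 1, by positivity, fun n => ?_⟩
  have h1 : ∀ w ∈ bad (n + 2), (0.72 : ℝ) ≤ 1.011 ^ (n + 2) * Phi n w := by
    intro w hw
    simp only [bad, Finset.mem_filter, not_le] at hw
    have h2 := hw.2
    unfold Phi
    set j := (J (n + 2) w).card
    have h3 : (20 : ℝ) ^ j ≤ 1.011 ^ (n + 2) := by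
      calc (20 : ℝ) ^ j ≤ (1.011 ^ 300) ^ j := by
            apply pow_le_pow_left₀ (by norm_num)
            rw [show 300 = 100 * 3 from rfl, pow_mul]
            have : (2.9 : ℝ) ≤ 1.011 ^ 100 := by norm_num
            calc (20 : ℝ) ≤ 2.9 ^ 3 := by norm_num
              _ ≤ _ := pow_le_pow_left₀ (by norm_num) this 3
        _ = 1.011 ^ (300 * j) := by rw [pow_mul]
        _ ≤ _ := pow_le_pow_right₀ (by norm_num) h2.le
    have h4 : (20 : ℝ) ^ j * 0.05 ^ j = 1 := by rw [← mul_pow]; norm_num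
    have h5 : 1 ≤ (1.011 : ℝ) ^ (n + 2) * 0.05 ^ j := by
      rw [← h4]; gcongr
    have h6 : (0.72 : ℝ) ≤ wt (w (n + 1) - w n) (w (n + 2) - w (n + 1)) := by
      unfold wt; split_ifs <;> norm_num
    rw [← mul_assoc]
    nlinarith
  have h2 := Finset.card_nsmul_le_sum _ _ _ h1
  rw [nsmul_eq_mul, ← Finset.mul_sum] at h2
  have h3 : ∑ w ∈ bad (n + 2), Phi n w ≤ ∑ w ∈ S (n + 2), Phi n w := by
    apply Finset.sum_le_sum_of_subset_of_nonneg (Finset.filter_subset _ _)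
    intro w _ _
    unfold Phi
    have := wt_pos (w (n + 1) - w n) (w (n + 2) - w (n + 1))
    positivity
  have h4 := h3.trans (sum_Phi n)
  have h5 : (1.011 : ℝ) ^ n * 2.44 ^ n ≤ 2.467 ^ n := by
    rw [← mul_pow]; apply pow_le_pow_left₀ (by norm_num); norm_num
  set Q := ∑ w ∈ S 2, Phi 0 w
  have h6 : ((bad (n + 2)).card : ℝ) * 0.72 ≤ 1.011 ^ 2 * Q * 2.467 ^ n := by
    calc _ ≤ _ := h2
      _ ≤ 1.011 ^ (n + 2) * (2.44 ^ n * Q) := by gcongr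
      _ = 1.011 ^ 2 * Q * (1.011 ^ n * 2.44 ^ n) := by ring
      _ ≤ _ := by gcongr
  have h7 : (0 : ℝ) < 2.467 ^ n := by positivity
  calc ((bad (n + 2)).card : ℝ) = (bad (n + 2)).card * 0.72 / 0.72 := by field_simp
    _ ≤ 1.011 ^ 2 * Q * 2.467 ^ n / 0.72 := by gcongr
    _ ≤ _ := by
      rw [add_mul, one_mul]
      have : 1.011 ^ 2 * Q * 2.467 ^ n / 0.72 = Q * 1.011 ^ 2 / 0.72 * 2.467 ^ n := by ring
      linarith

end Kst
namespace Kst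

def ins (w : ℕ → Pt) (k : ℕ) (a b : Pt) : ℕ → Pt := fun t =>
  if t ≤ k then w t else if t = k + 1 then a else if t = k + 2 then b else w (t - 2)

def del (w : ℕ → Pt) (k : ℕ) : ℕ → Pt := fun t => if t ≤ k then w t else w (t + 2)

lemma ins_lo {w : ℕ → Pt} {k : ℕ} {a b : Pt} {t : ℕ} (h : t ≤ k) : ins w k a b t = w t := by
  simp [ins, h]

lemma ins_1 {w : ℕ → Pt} {k : ℕ} {a b : Pt} : ins w k a b (k + 1) = a := by simp [ins]

lemma ins_2 {w : ℕ → Pt} {k : ℕ} {a b : Pt} : ins w k a b (k + 2) = b := by simp [ins]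

lemma ins_hi {w : ℕ → Pt} {k : ℕ} {a b : Pt} {t : ℕ} (h : k < t) :
    ins w k a b (t + 2) = w t := by
  unfold ins
  rw [if_neg (by omega), if_neg (by omega), if_neg (by omega)]
  rfl

lemma ins_inj {w w' : ℕ → Pt} {k : ℕ} {a b a' b' : Pt} (h : ins w k a b = ins w' k a' b') :
    w = w' ∧ a = a' ∧ b = b' := by
  refine ⟨?_, ?_, ?_⟩
  · funext t
    rcases Nat.lt_or_ge k t with ht | ht
    · have := congrFun h (t + 2)
      rwa [ins_hi ht, ins_hi ht] at this
    · have := congrFun h t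
      rwa [ins_lo ht, ins_lo ht] at this
  · have := congrFun h (k + 1)
    rwa [ins_1, ins_1] at this
  · have := congrFun h (k + 2)
    rwa [ins_2, ins_2] at this

/-- trichotomy of indices -/
lemma idx (k t : ℕ) : t ≤ k ∨ t = k + 1 ∨ t = k + 2 ∨ ∃ s, k < s ∧ t = s + 2 := by
  by_cases h : t ≤ k + 2
  · omega
  · exact Or.inr (Or.inr (Or.inr ⟨t - 2, by omega, by omega⟩))

lemma ins_saw {n : ℕ} {w : ℕ → Pt} {k : ℕ} {a b : Pt} (hw : IsSaw n w) (hk : k < n)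
    (h1 : A (w k) a) (h2 : A a b) (h3 : A b (w (k + 1))) (ha : ∀ t, t ≤ n → w t ≠ a)
    (hb : ∀ t, t ≤ n → w t ≠ b) : IsSaw (n + 2) (ins w k a b) := by
  refine ⟨by rw [ins_lo (Nat.zero_le _), hw.zero], ?_, ?_, ?_⟩
  · intro t ht
    rcases idx k t with h | rfl | rfl | ⟨s, hs, rfl⟩
    · rcases h.lt_or_eq with h | rfl
      · rw [ins_lo h.le, ins_lo h]; exact hw.adj t (by omega)
      · rw [ins_lo le_rfl, ins_1]; exact h1
    · rw [ins_1, ins_2]; exact h2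
    · rw [ins_2, show k + 2 + 1 = (k + 1) + 2 by ring, ins_hi (by omega)]; exact h3
    · rw [ins_hi hs, show s + 2 + 1 = (s + 1) + 2 by ring, ins_hi (by omega)]
      exact hw.adj s (by omega)
  · intro s t hs ht e
    have hab := A_ne h2
    rcases idx k s with h | rfl | rfl | ⟨s', hs', rfl⟩ <;>
    rcases idx k t with h' | rfl | rfl | ⟨t', ht', rfl⟩ <;>
    (try simp only [ins_1, ins_2] at e) <;>
    (try rw [ins_lo h] at e) <;> (try rw [ins_lo h'] at e) <;>
    (try rw [ins_hi hs'] at e) <;> (try rw [ins_hi ht'] at e) <;>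
    first
    | rfl
    | exact absurd e hab
    | exact absurd e.symm hab
    | exact absurd e (ha _ (by omega))
    | exact absurd e (hb _ (by omega))
    | exact absurd e.symm (ha _ (by omega))
    | exact absurd e.symm (hb _ (by omega))
    | (have := hw.inj _ _ (by omega) (by omega) e; omega)
  · intro t ht
    obtain ⟨s, rfl⟩ : ∃ s, t = s + 2 := ⟨t - 2, by omega⟩
    rw [ins_hi (by omega), ins_hi (by omega)]
    exact hw.hfreeze s (by omega)

lemma ins_saw_conv {n : ℕ} {w : ℕ → Pt} {k : ℕ} {a b : Pt} (hk : k < n)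
    (h : IsSaw (n + 2) (ins w k a b)) : A (w k) a ∧ A a b ∧ A b (w (k + 1)) ∧
    (∀ t, t ≤ n → w t ≠ a) ∧ (∀ t, t ≤ n → w t ≠ b) := by
  refine ⟨?_, ?_, ?_, ?_, ?_⟩
  · have := h.adj k (by omega)
    rwa [ins_lo le_rfl, ins_1] at this
  · have := h.adj (k + 1) (by omega)
    rwa [ins_1, ins_2] at this
  · have := h.adj (k + 2) (by omega)
    rwa [ins_2, show k + 2 + 1 = (k + 1) + 2 by ring, ins_hi (by omega)] at this
  · intro t ht e
    rcases Nat.lt_or_ge k t with h' | h'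
    · have := h.inj (t + 2) (k + 1) (by omega) (by omega) (by rw [ins_hi h', ins_1, e])
      omega
    · have := h.inj t (k + 1) (by omega) (by omega) (by rw [ins_lo h', ins_1, e])
      omega
  · intro t ht e
    rcases Nat.lt_or_ge k t with h' | h'
    · have := h.inj (t + 2) (k + 2) (by omega) (by omega) (by rw [ins_hi h', ins_2, e])
      omega
    · have := h.inj t (k + 2) (by omega) (by omega) (by rw [ins_lo h', ins_2, e])
      omega

lemma del_lo {w : ℕ → Pt} {k t : ℕ} (h : t ≤ k) : del w k t = w t := by simp [del, h]
lemma del_hi {w : ℕ → Pt} {k t : ℕ} (h : k < t) : del w k t = w (t + 2) := by simp [del, h]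

lemma del_saw {n : ℕ} {w : ℕ → Pt} {k : ℕ} (hw : IsSaw (n + 2) w) (hk : k < n)
    (h : A (w k) (w (k + 3))) : IsSaw n (del w k) := by
  refine ⟨by rw [del_lo (Nat.zero_le _), hw.zero], ?_, ?_, ?_⟩
  · intro t ht
    rcases lt_trichotomy t k with h' | rfl | h'
    · rw [del_lo h'.le, del_lo h']; exact hw.adj t (by omega)
    · rw [del_lo le_rfl, del_hi (by omega)]; exact h
    · rw [del_hi h', del_hi (by omega)]; exact hw.adj (t + 2) (by omega)
  · intro s t hs ht e
    rcases Nat.lt_or_ge k s with h1 | h1 <;> rcases Nat.lt_or_ge k t with h2 | h2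
    · rw [del_hi h1, del_hi h2] at e
      have := hw.inj _ _ (by omega) (by omega) e; omega
    · rw [del_hi h1, del_lo h2] at e
      have := hw.inj _ _ (by omega) (by omega) e; omega
    · rw [del_lo h1, del_hi h2] at e
      have := hw.inj _ _ (by omega) (by omega) e; omega
    · rw [del_lo h1, del_lo h2] at e
      have := hw.inj _ _ (by omega) (by omega) e; omega
  · intro t ht
    rw [del_hi (by omega), del_hi (by omega)]
    exact hw.hfreeze _ (by omega)

lemma ins_del (w : ℕ → Pt) (k : ℕ) : ins (del w k) k (w (k + 1)) (w (k + 2)) = w := by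
  funext t
  rcases idx k t with h | rfl | rfl | ⟨s, hs, rfl⟩
  · rw [ins_lo h, del_lo h]
  · rw [ins_1]
  · rw [ins_2]
  · rw [ins_hi hs, del_hi hs]

lemma J_le_ins {n : ℕ} (w : ℕ → Pt) {k : ℕ} (a b : Pt) :
    (J n w).card ≤ (J (n + 2) (ins w k a b)).card + 3 := by
  have h1 : J n w ⊆ ((J n w).filter (fun t => t + 3 ≤ k ∨ k < t)) ∪ {k - 2, k - 1, k} := by
    intro t ht
    simp only [Finset.mem_union, Finset.mem_filter, Finset.mem_insert, Finset.mem_singleton]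
    by_cases h : t + 3 ≤ k ∨ k < t
    · exact Or.inl ⟨ht, h⟩
    · right; omega
  have h2 : ((J n w).filter (fun t => t + 3 ≤ k ∨ k < t)).card ≤
      (J (n + 2) (ins w k a b)).card := by
    apply Finset.card_le_card_of_injOn (fun t => if t ≤ k then t else t + 2)
    · intro t ht
      simp only [Finset.coe_filter, Set.mem_ofPred_eq, mem_J] at ht
      obtain ⟨⟨h3, h4⟩, h5⟩ := ht
      rw [Finset.mem_coe, mem_J]
      rcases h5 with h5 | h5
      · simp only [if_pos (show t ≤ k by omega)]
        rw [ins_lo (by omega), ins_lo h5]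
        exact ⟨by omega, h4⟩
      · simp only [if_neg (show ¬ t ≤ k by omega)]
        rw [ins_hi h5, show t + 2 + 3 = t + 3 + 2 by ring, ins_hi (by omega)]
        exact ⟨by omega, h4⟩
    · intro s _ t _ e
      simp only at e
      split_ifs at e <;> omega
  have h3 := (Finset.card_le_card h1).trans (Finset.card_union_le _ _)
  have h4 := Finset.card_le_three (a := k - 2) (b := k - 1) (c := k)
  omega

lemma ins_le_J {n : ℕ} (w : ℕ → Pt) {k : ℕ} (hk : k < n) (a b : Pt) :
    (J (n + 2) (ins w k a b)).card ≤ (J n w).card + 5 := by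
  have h1 : J (n + 2) (ins w k a b) ⊆ ((J (n + 2) (ins w k a b)).filter
      (fun t => t + 3 ≤ k ∨ k + 2 < t)) ∪ {k - 2, k - 1, k, k + 1, k + 2} := by
    intro t ht
    simp only [Finset.mem_union, Finset.mem_filter, Finset.mem_insert, Finset.mem_singleton]
    by_cases h : t + 3 ≤ k ∨ k + 2 < t
    · exact Or.inl ⟨ht, h⟩
    · right; omega
  have h2 : ((J (n + 2) (ins w k a b)).filter (fun t => t + 3 ≤ k ∨ k + 2 < t)).card ≤
      (J n w).card := by
    apply Finset.card_le_card_of_injOn (fun t => if t ≤ k then t else t - 2)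
    · intro t ht
      simp only [Finset.coe_filter, Set.mem_ofPred_eq, mem_J] at ht
      obtain ⟨⟨h3, h4⟩, h5⟩ := ht
      rw [Finset.mem_coe, mem_J]
      rcases h5 with h5 | h5
      · simp only [if_pos (show t ≤ k by omega)]
        rw [ins_lo (by omega), ins_lo h5] at h4
        exact ⟨by omega, h4⟩
      · simp only [if_neg (show ¬ t ≤ k by omega)]
        obtain ⟨s, rfl⟩ : ∃ s, t = s + 2 := ⟨t - 2, by omega⟩
        rw [ins_hi (by omega), show s + 2 + 3 = s + 3 + 2 by ring, ins_hi (by omega)] at h4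
        exact ⟨by omega, h4⟩
    · intro s hs t ht e
      simp only [Finset.coe_filter, Set.mem_ofPred_eq, mem_J] at hs ht
      simp only at e
      split_ifs at e <;> omega
  have h3 := (Finset.card_le_card h1).trans (Finset.card_union_le _ _)
  have h4 := Finset.card_le_five (a := k - 2) (b := k - 1) (c := k) (d := k + 1) (e := k + 2)
  omega

abbrev Ev := ℕ × Pt × Pt

def I (w : ℕ → Pt) (e : Ev) : ℕ → Pt := ins w e.1 (w e.1 + e.2.1) (w (e.1 + 1) + e.2.2)

lemma I_inj {w w' : ℕ → Pt} {e e' : Ev} (h : I w e = I w' e') (h1 : e.1 = e'.1) :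
    w = w' ∧ e = e' := by
  obtain ⟨k, a, b⟩ := e
  obtain ⟨k', a', b'⟩ := e'
  simp only at h1
  subst h1
  obtain ⟨rfl, h2, h3⟩ := ins_inj h
  simp only [add_right_inj] at h2 h3
  rw [h2, h3]
  exact ⟨rfl, rfl⟩

open Classical in
noncomputable def Fib (n : ℕ) (w : ℕ → Pt) : Finset Ev :=
  (Finset.range n ×ˢ dirs ×ˢ dirs).filter (fun e => IsSaw (n + 2) (I w e))

lemma mem_Fib {n : ℕ} {w : ℕ → Pt} {e : Ev} : e ∈ Fib n w ↔
    (e.1 < n ∧ e.2.1 ∈ dirs ∧ e.2.2 ∈ dirs) ∧ IsSaw (n + 2) (I w e) := by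
  simp [Fib]

lemma card_Fib (n : ℕ) (w : ℕ → Pt) : (Fib n w).card ≤ 16 * n := by
  classical
  refine (Finset.card_le_card (t := Finset.range n ×ˢ dirs ×ˢ dirs)
    (fun e he => by simpa using (mem_Fib.1 he).1)).trans ?_
  rw [Finset.card_product, Finset.card_product, Finset.card_range]
  have : dirs.card = 4 := by decide
  rw [this]; omega

lemma down {n : ℕ} {w' : ℕ → Pt} {k : ℕ} (hw : IsSaw (n + 2) w') (hk : k ∈ J (n + 2) w') :
    ∃ w e, IsSaw n w ∧ e ∈ Fib n w ∧ e.1 = k ∧ I w e = w' := by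
  rw [mem_J] at hk
  have hk' : k < n := by omega
  have e : I (del w' k) (k, w' (k + 1) - w' k, w' (k + 2) - w' (k + 3)) = w' := by
    unfold I
    simp only
    rw [del_lo le_rfl, del_hi (by omega : k < k + 1)]
    simp only [show k + 1 + 2 = k + 3 from rfl, add_sub_cancel]
    exact ins_del w' k
  refine ⟨del w' k, (k, w' (k + 1) - w' k, w' (k + 2) - w' (k + 3)), del_saw hw hk' hk.2, ?_, rfl, e⟩
  rw [mem_Fib, e]
  exact ⟨⟨hk', (A_iff _ _).1 (hw.adj k (by omega)),
    (A_iff _ _).1 (A_symm (hw.adj (k + 2) (by omega)))⟩, hw⟩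

lemma mem_J_I {n : ℕ} {w : ℕ → Pt} {e : Ev} (hw : IsSaw n w) (he : e.1 < n) :
    e.1 ∈ J (n + 2) (I w e) := by
  rw [mem_J]
  refine ⟨by omega, ?_⟩
  unfold I
  rw [ins_lo le_rfl, show e.1 + 3 = (e.1 + 1) + 2 by ring, ins_hi (by omega)]
  exact hw.adj _ he

lemma mem_J_I2 {n : ℕ} {w : ℕ → Pt} {e : Ev} {l : ℕ} (h : e.1 < l) (hl : l ∈ J n w) :
    l + 2 ∈ J (n + 2) (I w e) := by
  rw [mem_J] at hl ⊢
  refine ⟨by omega, ?_⟩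
  unfold I
  rw [ins_hi h, show l + 2 + 3 = (l + 3) + 2 by ring, ins_hi (by omega)]
  exact hl.2

lemma I_I {w : ℕ → Pt} {e e' : Ev} (h : e.1 < e'.1) :
    I (I w e') e = ins (I w e') e.1 (w e.1 + e.2.1) (w (e.1 + 1) + e.2.2) := by
  have h1 : I w e' e.1 = w e.1 := ins_lo h.le
  have h2 : I w e' (e.1 + 1) = w (e.1 + 1) := ins_lo h
  rw [I, h1, h2]

lemma A_bound {p q : Pt} (h : A p q) : q.1 - p.1 ≤ 1 ∧ p.1 - q.1 ≤ 1 ∧ q.2 - p.2 ≤ 1 ∧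
    p.2 - q.2 ≤ 1 := by
  unfold A at h
  rcases abs_cases (p.1 - q.1) with h1 | h1 <;> rcases abs_cases (p.2 - q.2) with h2 | h2 <;> omega

noncomputable def box : Finset Pt := Finset.Icc (-4) 4 ×ˢ Finset.Icc (-4) 4

lemma compat {n : ℕ} {w : ℕ → Pt} {e e' : Ev} (hw : IsSaw n w) (he : e ∈ Fib n w)
    (he' : e' ∈ Fib n w) (h : e.1 < e'.1) (hbox : w e'.1 - w e.1 ∉ box) :
    IsSaw (n + 4) (I (I w e') e) := by
  rw [mem_Fib] at he he'
  obtain ⟨⟨hk, -, -⟩, hs⟩ := he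
  obtain ⟨⟨hk', -, -⟩, hs'⟩ := he'
  rw [I_I h]
  obtain ⟨c1, c2, c3, c4, c5⟩ := ins_saw_conv hk hs
  obtain ⟨d1, d2, d3, d4, d5⟩ := ins_saw_conv hk' hs'
  have h1 : I w e' e.1 = w e.1 := ins_lo h.le
  have h2 : I w e' (e.1 + 1) = w (e.1 + 1) := ins_lo h
  have hfar : ∀ p q : Pt, A (w e.1) p ∨ (∃ r, A (w e.1) r ∧ A r p) →
      A (w e'.1) q ∨ (∃ r, A (w e'.1) r ∧ A r q) → q ≠ p := by
    rintro p q hp hq rfl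
    apply hbox
    simp only [box, Finset.mem_product, Finset.mem_Icc, Prod.fst_sub, Prod.snd_sub]
    rcases hp with hp | ⟨r, hp, hp'⟩ <;> rcases hq with hq | ⟨s, hq, hq'⟩
    · have := A_bound hp; have := A_bound hq; omega
    · have := A_bound hp; have := A_bound hq; have := A_bound hq'; omega
    · have := A_bound hp; have := A_bound hq; have := A_bound hp'; omega
    · have := A_bound hp; have := A_bound hq; have := A_bound hp'; have := A_bound hq'; omega
  apply ins_saw hs' (by omega)
  · rw [h1]; exact c1
  · exact c2
  · rw [h2]; exact c3
  · intro t ht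
    unfold I
    rcases idx e'.1 t with h | rfl | rfl | ⟨s, hs, rfl⟩
    · rw [ins_lo h]; exact c4 _ (by omega)
    · rw [ins_1]; exact hfar _ _ (Or.inl c1) (Or.inl d1)
    · rw [ins_2]; exact hfar _ _ (Or.inl c1) (Or.inr ⟨_, d1, d2⟩)
    · rw [ins_hi hs]; exact c4 _ (by omega)
  · intro t ht
    unfold I
    rcases idx e'.1 t with h | rfl | rfl | ⟨s, hs, rfl⟩
    · rw [ins_lo h]; exact c5 _ (by omega)
    · rw [ins_1]; exact hfar _ _ (Or.inr ⟨_, c1, c2⟩) (Or.inl d1)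
    · rw [ins_2]; exact hfar _ _ (Or.inr ⟨_, c1, c2⟩) (Or.inr ⟨_, d1, d2⟩)
    · rw [ins_hi hs]; exact c5 _ (by omega)

open Classical in
noncomputable def Q (n : ℕ) (w : ℕ → Pt) : Finset (Ev × Ev) :=
  (Fib n w ×ˢ Fib n w).filter (fun x => x.1.1 < x.2.1 ∧ IsSaw (n + 4) (I (I w x.2) x.1))

lemma mem_Q {n : ℕ} {w : ℕ → Pt} {x : Ev × Ev} : x ∈ Q n w ↔
    (x.1 ∈ Fib n w ∧ x.2 ∈ Fib n w) ∧ x.1.1 < x.2.1 ∧ IsSaw (n + 4) (I (I w x.2) x.1) := by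
  simp [Q]

lemma card_Q {n : ℕ} {w : ℕ → Pt} (hw : IsSaw n w) :
    (Fib n w).card ^ 2 ≤ 2 * (Q n w).card + 1296 * (Fib n w).card := by
  classical
  set B := (Fib n w ×ˢ Fib n w).filter (fun x => w x.2.1 - w x.1.1 ∈ box) with hB
  have h1 : Fib n w ×ˢ Fib n w ⊆ Q n w ∪ (Q n w).image Prod.swap ∪ B := by
    rintro ⟨e, e'⟩ hx
    rw [Finset.mem_product] at hx
    obtain ⟨he, he'⟩ := hx
    simp only at he he'
    by_cases hb : w e'.1 - w e.1 ∈ box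
    · apply Finset.mem_union_right
      rw [hB, Finset.mem_filter, Finset.mem_product]
      exact ⟨⟨he, he'⟩, hb⟩
    · apply Finset.mem_union_left
      rcases lt_trichotomy e.1 e'.1 with h | h | h
      · apply Finset.mem_union_left
        rw [mem_Q]
        exact ⟨⟨he, he'⟩, h, compat hw he he' h hb⟩
      · exfalso; apply hb; rw [h, sub_self]; simp [box]
      · apply Finset.mem_union_right
        rw [Finset.mem_image]
        refine ⟨(e', e), ?_, rfl⟩
        rw [mem_Q]
        refine ⟨⟨he', he⟩, h, compat hw he' he h ?_⟩
        intro h3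
        apply hb
        simp only [box, Finset.mem_product, Finset.mem_Icc, Prod.fst_sub, Prod.snd_sub] at h3 ⊢
        omega
  have h2 : B.card ≤ (Fib n w).card * 1296 := by
    have : (Fib n w ×ˢ (box ×ˢ dirs ×ˢ dirs)).card = (Fib n w).card * 1296 := by
      have h4 : dirs.card = 4 := by decide
      have h5 : box.card = 81 := by simp [box]
      rw [Finset.card_product, Finset.card_product, Finset.card_product, h4, h5]
    rw [← this]
    apply Finset.card_le_card_of_injOn (fun x => (x.1, w x.2.1 - w x.1.1, x.2.2))
    · rintro ⟨e, e'⟩ hx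
      rw [Finset.mem_coe, hB, Finset.mem_filter, Finset.mem_product] at hx
      rw [Finset.mem_coe]
      simp only [Finset.mem_product]
      exact ⟨hx.1.1, hx.2, (mem_Fib.1 hx.1.2).1.2⟩
    · rintro ⟨e, k, e'⟩ hx ⟨f, l, f'⟩ hy h
      rw [Finset.mem_coe, hB, Finset.mem_filter, Finset.mem_product] at hx hy
      simp only [Prod.mk.injEq] at h
      obtain ⟨rfl, h3, rfl⟩ := h
      have hk := (mem_Fib.1 hx.1.2).1.1
      have hl := (mem_Fib.1 hy.1.2).1.1
      simp only at hk hl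
      have := hw.inj k l hk.le hl.le (sub_left_injective h3)
      rw [this]
  have h3 := Finset.card_le_card h1
  rw [Finset.card_product] at h3
  have h4 := Finset.card_union_le (Q n w ∪ (Q n w).image Prod.swap) B
  have h5 := Finset.card_union_le (Q n w) ((Q n w).image Prod.swap)
  have h6 := Finset.card_image_le (s := Q n w) (f := Prod.swap)
  rw [sq]
  omega

lemma two_lt (X : Finset ℕ) : 2 * ((X ×ˢ X).filter (fun x => x.1 < x.2)).card ≤ X.card ^ 2 := by
  classical
  set Y := (X ×ˢ X).filter (fun x => x.1 < x.2) with hY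
  have h1 : (Y.image Prod.swap).card = Y.card := Finset.card_image_of_injective _ Prod.swap_injective
  have h2 : Disjoint Y (Y.image Prod.swap) := by
    rw [Finset.disjoint_left]
    rintro ⟨a, b⟩ h h'
    rw [Finset.mem_image] at h'
    obtain ⟨⟨c, d⟩, h3, h4⟩ := h'
    simp only [Prod.swap_prod_mk, Prod.mk.injEq] at h4
    simp only [hY, Finset.mem_filter] at h h3
    omega
  have h3 : Y ∪ Y.image Prod.swap ⊆ X ×ˢ X := by
    apply Finset.union_subset (Finset.filter_subset _ _)
    intro x hx
    rw [Finset.mem_image] at hx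
    obtain ⟨y, hy, rfl⟩ := hx
    simp only [hY, Finset.mem_filter, Finset.mem_product] at hy
    rw [Finset.mem_product]
    exact ⟨hy.1.2, hy.1.1⟩
  have h4 := Finset.card_le_card h3
  rw [Finset.card_union_of_disjoint h2, h1, Finset.card_product] at h4
  rw [sq]; omega

end Kst
namespace Kst

noncomputable def mm (n : ℕ) (w : ℕ → Pt) : ℝ := max ((J n w).card : ℝ) (n / 300)

lemma mm_ge (n : ℕ) (w : ℕ → Pt) : (n : ℝ) / 300 ≤ mm n w := le_max_right _ _

lemma mm_pos {n : ℕ} (hn : 1 ≤ n) (w : ℕ → Pt) : 0 < mm n w := by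
  have : (0 : ℝ) < n := by exact_mod_cast hn
  exact lt_of_lt_of_le (by positivity) (mm_ge n w)

noncomputable def X (n : ℕ) (w : ℕ → Pt) : ℝ := (Fib n w).card / mm n w

lemma X_nonneg {n : ℕ} (hn : 1 ≤ n) (w : ℕ → Pt) : 0 ≤ X n w := by
  have := mm_pos hn w
  unfold X; positivity

lemma X_le {n : ℕ} (hn : 1 ≤ n) (w : ℕ → Pt) : X n w ≤ 4800 := by
  have h0 := mm_pos hn w
  have h1 := mm_ge n w
  have h2 : ((Fib n w).card : ℝ) ≤ 16 * n := by exact_mod_cast card_Fib n w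
  unfold X
  rw [div_le_iff₀ h0]
  linarith

lemma first {n : ℕ} (hn : 1 ≤ n) :
    ((good (n + 2)).card : ℝ) ≤ (1 + 900 / n) * ∑ w ∈ S n, X n w := by
  classical
  have hn' : (0 : ℝ) < n := by exact_mod_cast hn
  set P : Finset (Σ _ : ℕ → Pt, Ev) := (S n).sigma (fun w => Fib n w) with hP
  set G := P.filter (fun x => I x.1 x.2 ∈ good (n + 2)) with hG
  have hgood : ∀ w' ∈ good (n + 2), (IsSaw (n + 2) w') ∧ n + 2 ≤ 300 * (J (n + 2) w').card := by
    intro w' h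
    simpa [good, mem_S] using h
  have h1 : ∀ w' ∈ good (n + 2), (1 : ℝ) ≤
      ∑ x ∈ G.filter (fun x => I x.1 x.2 = w'), 1 / ((J (n + 2) (I x.1 x.2)).card : ℝ) := by
    intro w' hw'
    obtain ⟨hs, hj⟩ := hgood w' hw'
    have hj0 : (0 : ℝ) < (J (n + 2) w').card := by
      have : 0 < (J (n + 2) w').card := by omega
      exact_mod_cast this
    have e : ∑ x ∈ G.filter (fun x => I x.1 x.2 = w'), 1 / ((J (n + 2) (I x.1 x.2)).card : ℝ) =
        (G.filter (fun x => I x.1 x.2 = w')).card * (1 / ((J (n + 2) w').card : ℝ)) := by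
      rw [← nsmul_eq_mul, ← Finset.sum_const]
      apply Finset.sum_congr rfl
      intro x hx
      rw [(Finset.mem_filter.1 hx).2]
    rw [e, mul_one_div, le_div_iff₀ hj0, one_mul]
    have hc : (J (n + 2) w').card ≤ (G.filter (fun x => I x.1 x.2 = w')).card := by
      have : J (n + 2) w' ⊆ (G.filter (fun x => I x.1 x.2 = w')).image (fun x => x.2.1) := by
        intro k hk
        obtain ⟨w, ev, hw, he, hA, hB⟩ := down hs hk
        rw [Finset.mem_image]
        have hI : I w ev = w' := by first | exact hA | exact hB
        refine ⟨⟨w, ev⟩, ?_, by first | exact hA | exact hB⟩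
        simp only [hG, hP, Finset.mem_filter, Finset.mem_sigma, mem_S]
        exact ⟨⟨⟨hw, he⟩, by rw [hI]; exact hw'⟩, hI⟩
      exact (Finset.card_le_card this).trans Finset.card_image_le
    exact_mod_cast hc
  have h2 : ((good (n + 2)).card : ℝ) ≤ ∑ x ∈ G, 1 / ((J (n + 2) (I x.1 x.2)).card : ℝ) := by
    rw [← Finset.sum_fiberwise_of_maps_to (s := G) (t := good (n + 2))
      (g := fun x : (Σ _ : ℕ → Pt, Ev) => I x.1 x.2)
      (fun x hx => (Finset.mem_filter.1 hx).2)]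
    have := Finset.sum_le_sum h1
    simpa using this
  have h3 : ∑ x ∈ G, 1 / ((J (n + 2) (I x.1 x.2)).card : ℝ) ≤
      ∑ x ∈ P, (1 + 900 / n) * (1 / mm n x.1) := by
    calc _ ≤ ∑ x ∈ G, (1 + 900 / n) * (1 / mm n x.1) := by
          apply Finset.sum_le_sum
          intro x hx
          rw [hG, Finset.mem_filter] at hx
          obtain ⟨hs, hj⟩ := hgood _ hx.2
          have h5 : (J n x.1).card ≤ (J (n + 2) (I x.1 x.2)).card + 3 := J_le_ins _ _ _
          set j' := (J (n + 2) (I x.1 x.2)).card with hj'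
          have hjb : (n : ℝ) / 300 ≤ j' := by
            have : (n : ℝ) ≤ 300 * j' := by exact_mod_cast (by omega : n ≤ 300 * j')
            linarith
          have hj0 : (0 : ℝ) < j' := lt_of_lt_of_le (by positivity) hjb
          have h5' : ((J n x.1).card : ℝ) ≤ j' + 3 := by exact_mod_cast h5
          have h6 : mm n x.1 ≤ j' + 3 := max_le h5' (by linarith)
          have h7 := mm_pos hn x.1
          rw [mul_one_div, div_le_div_iff₀ hj0 h7, one_mul]
          have h8 : 3 ≤ 900 / (n : ℝ) * j' := by
            rw [div_mul_eq_mul_div, le_div_iff₀ hn']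
            linarith
          linarith
      _ ≤ _ := by
          apply Finset.sum_le_sum_of_subset_of_nonneg (Finset.filter_subset _ _)
          intro x _ _
          have h7 := mm_pos hn x.1
          positivity
  refine h2.trans (h3.trans (le_of_eq ?_))
  rw [← Finset.mul_sum, hP, Finset.sum_sigma]
  congr 1
  apply Finset.sum_congr rfl
  intro w _
  simp [X, div_eq_mul_inv]

lemma second {n : ℕ} (hn : 1 ≤ n) :
    ∑ w ∈ S n, 2 * (Q n w).card / (mm n w + 10) ^ 2 ≤ ((S (n + 4)).card : ℝ) := by
  classical
  set R : Finset (Σ _ : ℕ → Pt, Ev × Ev) := (S n).sigma (fun w => Q n w) with hR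
  set f : (Σ _ : ℕ → Pt, Ev × Ev) → (ℕ → Pt) := fun x => I (I x.1 x.2.2) x.2.1 with hf
  have hR' : ∀ x ∈ R, IsSaw n x.1 ∧ x.2.1 ∈ Fib n x.1 ∧ x.2.2 ∈ Fib n x.1 ∧ x.2.1.1 < x.2.2.1 ∧
      IsSaw (n + 4) (f x) := by
    intro x hx
    rw [hR, Finset.mem_sigma, mem_S, mem_Q] at hx
    exact ⟨hx.1, hx.2.1.1, hx.2.1.2, hx.2.2.1, hx.2.2.2⟩
  have hJ : ∀ x ∈ R, x.2.1.1 ∈ J (n + 4) (f x) ∧ x.2.2.1 + 2 ∈ J (n + 4) (f x) := by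
    intro x hx
    obtain ⟨h1, h2, h3, h4, h5⟩ := hR' x hx
    have h6 := (mem_Fib.1 h2).1.1
    have h7 := (mem_Fib.1 h3)
    exact ⟨mem_J_I h7.2 (by omega), mem_J_I2 h4 (mem_J_I h1 h7.1.1)⟩
  have h1 : ∀ W ∈ S (n + 4), ∑ x ∈ R.filter (fun x => f x = W),
      2 / ((J (n + 4) (f x)).card : ℝ) ^ 2 ≤ 1 := by
    intro W _
    have e : ∑ x ∈ R.filter (fun x => f x = W), 2 / ((J (n + 4) (f x)).card : ℝ) ^ 2 =
        (R.filter (fun x => f x = W)).card * (2 / ((J (n + 4) W).card : ℝ) ^ 2) := by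
      rw [← nsmul_eq_mul, ← Finset.sum_const]
      apply Finset.sum_congr rfl
      intro x hx
      rw [(Finset.mem_filter.1 hx).2]
    have hc : (R.filter (fun x => f x = W)).card ≤
        ((J (n + 4) W ×ˢ J (n + 4) W).filter (fun x => x.1 < x.2)).card := by
      apply Finset.card_le_card_of_injOn (fun x => (x.2.1.1, x.2.2.1 + 2))
      · intro x hx
        rw [Finset.mem_coe, Finset.mem_filter] at hx
        obtain ⟨hx, rfl⟩ := hx
        rw [Finset.mem_coe, Finset.mem_filter, Finset.mem_product]
        refine ⟨hJ x hx, ?_⟩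
        have := (hR' x hx).2.2.2.1
        simp only; omega
      · intro x hx y hy h
        rw [Finset.mem_coe, Finset.mem_filter] at hx hy
        simp only [Prod.mk.injEq, add_left_inj] at h
        have e := hx.2.trans hy.2.symm
        obtain ⟨w, e1, e2⟩ := x
        obtain ⟨w', e1', e2'⟩ := y
        simp only [hf] at e h
        obtain ⟨h3, rfl⟩ := I_inj e h.1
        obtain ⟨rfl, rfl⟩ := I_inj h3 h.2
        rfl
    have h2 := two_lt (J (n + 4) W)
    have h3 : (2 * (R.filter (fun x => f x = W)).card : ℝ) ≤ ((J (n + 4) W).card : ℝ) ^ 2 := by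
      exact_mod_cast (by omega : 2 * (R.filter (fun x => f x = W)).card ≤ (J (n + 4) W).card ^ 2)
    rw [e, mul_div_assoc']
    apply div_le_one_of_le₀ _ (by positivity)
    linarith
  have h2 : ∑ x ∈ R, 2 / ((J (n + 4) (f x)).card : ℝ) ^ 2 ≤ ((S (n + 4)).card : ℝ) := by
    rw [← Finset.sum_fiberwise_of_maps_to (t := S (n + 4)) (g := f)
      (fun x hx => mem_S.2 (hR' x hx).2.2.2.2)]
    have := Finset.sum_le_sum h1
    simpa using this
  refine le_trans ?_ h2
  have h3 : ∑ x ∈ R, 2 / (mm n x.1 + 10) ^ 2 ≤ ∑ x ∈ R, 2 / ((J (n + 4) (f x)).card : ℝ) ^ 2 := by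
    apply Finset.sum_le_sum
    intro x hx
    obtain ⟨g1, g2, g3, g4, g5⟩ := hR' x hx
    have g6 := (mem_Fib.1 g2).1.1
    have g7 := (mem_Fib.1 g3).1.1
    have hpos : 0 < (J (n + 4) (f x)).card := Finset.card_pos.2 ⟨_, (hJ x hx).1⟩
    have hpos' : (0 : ℝ) < (J (n + 4) (f x)).card := by exact_mod_cast hpos
    have k1 : (J (n + 2) (I x.1 x.2.2)).card ≤ (J n x.1).card + 5 := ins_le_J _ g7 _ _
    have k2 : (J (n + 4) (f x)).card ≤ (J (n + 2) (I x.1 x.2.2)).card + 5 :=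
      ins_le_J _ (by omega) _ _
    have k3 : ((J (n + 4) (f x)).card : ℝ) ≤ (J n x.1).card + 10 := by
      exact_mod_cast (by omega : (J (n + 4) (f x)).card ≤ (J n x.1).card + 10)
    have k4 : ((J n x.1).card : ℝ) ≤ mm n x.1 := le_max_left _ _
    have k5 : ((J (n + 4) (f x)).card : ℝ) ≤ mm n x.1 + 10 := by linarith
    gcongr
  refine le_trans (le_of_eq ?_) h3
  rw [hR, Finset.sum_sigma]
  apply Finset.sum_congr rfl
  intro w _
  simp only [Finset.sum_const, nsmul_eq_mul]
  ring

lemma real_ineq {i m q n : ℝ} (hi : 0 ≤ i) (hn : 0 < n) (hm : n / 300 ≤ m) (hX : i / m ≤ 4800)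
    (hq : i ^ 2 ≤ 2 * q + 1296 * i) :
    (i / m) ^ 2 - (6000 * 4800 ^ 2 + 1296 * 4800 * 300) / n ≤ 2 * q / (m + 10) ^ 2 := by
  have hm0 : 0 < m := lt_of_lt_of_le (by positivity) hm
  have h1 : (i ^ 2 - 1296 * i) / (m + 10) ^ 2 ≤ 2 * q / (m + 10) ^ 2 := by
    gcongr; linarith
  refine le_trans ?_ h1
  set x := i / m with hx
  have hx0 : 0 ≤ x := by positivity
  have hix : i = x * m := by rw [hx]; field_simp
  have hmn : 1 / m ≤ 300 / n := by
    rw [div_le_div_iff₀ hm0 hn]; linarith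
  have h2 : x ^ 2 * (1 - 20 / m) ≤ i ^ 2 / (m + 10) ^ 2 := by
    rw [hix, le_div_iff₀ (by positivity)]
    have : (1 - 20 / m) * (m + 10) ^ 2 ≤ m ^ 2 := by
      have e : (1 - 20 / m) * (m + 10) ^ 2 = m ^ 2 - 300 - 2000 / m := by field_simp; ring
      have : 0 < 2000 / m := by positivity
      rw [e]; linarith
    calc _ = x ^ 2 * ((1 - 20 / m) * (m + 10) ^ 2) := by ring
      _ ≤ x ^ 2 * m ^ 2 := by gcongr
      _ = _ := by ring
  have h3 : 1296 * i / (m + 10) ^ 2 ≤ 1296 * x * (1 / m) := by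
    rw [hix, div_le_iff₀ (by positivity)]
    have : m ≤ 1 / m * (m + 10) ^ 2 := by
      rw [div_mul_eq_mul_div, le_div_iff₀ hm0]; nlinarith
    calc _ = 1296 * x * m := by ring
      _ ≤ 1296 * x * (1 / m * (m + 10) ^ 2) := by gcongr
      _ = _ := by ring
  have h4 : 1296 * x * (1 / m) ≤ 1296 * 4800 * (300 / n) := by gcongr
  have h5 : x ^ 2 * (20 * (1 / m)) ≤ 4800 ^ 2 * (20 * (300 / n)) := by gcongr
  have e1 : x ^ 2 * (1 - 20 / m) = x ^ 2 - x ^ 2 * (20 * (1 / m)) := by ring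
  have e2 : (6000 * 4800 ^ 2 + 1296 * 4800 * 300) / n =
    1296 * 4800 * (300 / n) + 4800 ^ 2 * (20 * (300 / n)) := by ring
  rw [sub_div, e2]
  linarith

lemma card_pos (n : ℕ) : (0 : ℝ) < (S n).card :=
  lt_of_lt_of_le (by positivity) (lower n)

lemma ratio_ineq : ∃ D : ℝ, 0 < D ∧ ∀ n : ℕ, 1 ≤ n →
    (((S (n + 2)).card : ℝ) / (S n).card) ^ 2 - D / n ≤ ((S (n + 4)).card : ℝ) / (S n).card := by
  obtain ⟨K, hK, hbad⟩ := bad_bound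
  set D2 : ℝ := 900 * 4800 + K * 1000 with hD2
  set D0 : ℝ := 6000 * 4800 ^ 2 + 1296 * 4800 * 300 with hD0
  refine ⟨2 * 4800 * D2 + D2 ^ 2 + D0, by positivity, fun n hn => ?_⟩
  have hn' : (0 : ℝ) < n := by exact_mod_cast hn
  have hn1 : (1 : ℝ) ≤ n := by exact_mod_cast hn
  set c := ((S n).card : ℝ) with hc
  have hc0 : 0 < c := card_pos n
  set Y := ∑ w ∈ S n, X n w with hY
  have hY0 : 0 ≤ Y := Finset.sum_nonneg (fun w _ => X_nonneg hn w)
  have hY1 : Y ≤ 4800 * c := by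
    have := Finset.sum_le_card_nsmul (S n) (X n) 4800 (fun w _ => X_le hn w)
    rw [nsmul_eq_mul] at this
    linarith
  have h1 := first hn
  have h2 : ((S (n + 2)).card : ℝ) = (good (n + 2)).card + (bad (n + 2)).card := by
    exact_mod_cast (good_add_bad (n + 2)).symm
  have h3 : ((bad (n + 2)).card : ℝ) ≤ K * 1000 / n * c := by
    have b1 := one_add_mul_le_pow (a := (0.003 / 2.467 : ℝ)) (by norm_num) n
    have b2 : (n : ℝ) / 1000 ≤ (2.47 / 2.467) ^ n := by
      calc (n : ℝ) / 1000 ≤ 1 + n * (0.003 / 2.467) := by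
            have : (1 : ℝ) / 1000 ≤ 0.003 / 2.467 := by norm_num
            nlinarith
        _ ≤ _ := b1
        _ = _ := by norm_num
    rw [div_pow, le_div_iff₀ (by positivity)] at b2
    have b3 := lower n
    have b4 : (2.467 : ℝ) ^ n ≤ 1000 / n * c := by
      rw [div_mul_eq_mul_div, le_div_iff₀ hn']
      linarith
    calc _ ≤ _ := hbad n
      _ ≤ K * (1000 / n * c) := by gcongr
      _ = _ := by ring
  set x := Y / c with hx
  have hx0 : 0 ≤ x := by positivity
  have hx1 : x ≤ 4800 := by rw [hx, div_le_iff₀ hc0]; exact hY1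
  have hYx : Y = x * c := by rw [hx]; field_simp
  have h4 : ((S (n + 2)).card : ℝ) / c ≤ x + D2 / n := by
    rw [div_le_iff₀ hc0, h2]
    have h5 : 900 / n * Y ≤ 900 / n * (4800 * c) := by gcongr
    have e : (x + D2 / n) * c = Y + 900 / n * (4800 * c) + K * 1000 / n * c := by
      rw [hYx, hD2]; ring
    rw [e]
    linarith
  have h5 : Y ^ 2 ≤ c * ∑ w ∈ S n, X n w ^ 2 := sq_sum_le_card_mul_sum_sq
  have h6 : ∑ w ∈ S n, X n w ^ 2 - c * (D0 / n) ≤ ((S (n + 4)).card : ℝ) := by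
    refine le_trans ?_ (second hn)
    have : ∑ w ∈ S n, (X n w ^ 2 - D0 / n) ≤
        ∑ w ∈ S n, 2 * ((Q n w).card : ℝ) / (mm n w + 10) ^ 2 := by
      apply Finset.sum_le_sum
      intro w hw
      refine real_ineq (Nat.cast_nonneg _) hn' (mm_ge n w) (X_le hn w) ?_
      exact_mod_cast card_Q (mem_S.1 hw)
    rw [Finset.sum_sub_distrib, Finset.sum_const, nsmul_eq_mul] at this
    exact this
  have h7 : x ^ 2 - D0 / n ≤ ((S (n + 4)).card : ℝ) / c := by
    rw [le_div_iff₀ hc0]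
    have : x ^ 2 * c ≤ ∑ w ∈ S n, X n w ^ 2 := by
      rw [hYx] at h5
      have : c * (x ^ 2 * c) ≤ c * ∑ w ∈ S n, X n w ^ 2 := by linarith
      exact le_of_mul_le_mul_left this hc0
    linarith
  have h8 : 0 ≤ ((S (n + 2)).card : ℝ) / c := div_nonneg (Nat.cast_nonneg _) hc0.le
  have h9 : (((S (n + 2)).card : ℝ) / c) ^ 2 ≤ (x + D2 / n) ^ 2 := pow_le_pow_left₀ h8 h4 2
  have hD2p : 0 < D2 := by positivity
  have h10 : (x + D2 / n) ^ 2 ≤ x ^ 2 + (2 * 4800 * D2 + D2 ^ 2) / n := by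
    have a1 : x * (D2 / n) ≤ 4800 * (D2 / n) := by gcongr
    have a2 : (D2 / n) ^ 2 ≤ D2 ^ 2 / n := by
      rw [div_pow]
      apply div_le_div_of_nonneg_left (by positivity) hn'
      nlinarith
    have e : x ^ 2 + (2 * 4800 * D2 + D2 ^ 2) / n = x ^ 2 + 2 * (4800 * (D2 / n)) + D2 ^ 2 / n := by
      ring
    rw [e]
    nlinarith
  have e : (2 * 4800 * D2 + D2 ^ 2 + D0) / n = (2 * 4800 * D2 + D2 ^ 2) / n + D0 / n := by ring
  rw [e]
  linarith

end Kst

/-- Kesten's ratio limit theorem for the square lattice: `σ_{n+2}/σ_n → μ²`. -/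
theorem square_lattice_ratio_two (μ : ℝ)
    (hμ : Tendsto (fun n : ℕ => (sawCount squareLattice (0, 0) n : ℝ) ^ ((1 : ℝ) / n))
      atTop (nhds μ)) :
    Tendsto (fun n : ℕ =>
        (sawCount squareLattice (0, 0) (n + 2) : ℝ) / (sawCount squareLattice (0, 0) n : ℝ))
      atTop (nhds (μ ^ 2)) := by
  simp only [Kst.sawCount_eq] at hμ ⊢
  have hge : 2.47 ≤ μ := by
    apply ge_of_tendsto hμ
    filter_upwards [eventually_ge_atTop 1] with n hn
    have hn' : (n : ℝ) ≠ 0 := by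
      have : (0 : ℝ) < n := by exact_mod_cast hn
      exact this.ne'
    calc (2.47 : ℝ) = ((2.47 : ℝ) ^ n) ^ ((1 : ℝ) / n) := by
          rw [← Real.rpow_natCast, ← Real.rpow_mul (by norm_num), mul_one_div_cancel hn',
            Real.rpow_one]
      _ ≤ _ := Real.rpow_le_rpow (by positivity) (Kst.lower n) (by positivity)
  have hμ0 : 0 < μ := by linarith
  obtain ⟨D, hD, h⟩ := Kst.ratio_ineq
  have hl : Tendsto (fun n : ℕ => Real.log ((Kst.S n).card : ℝ) / n) atTop (nhds (Real.log μ)) := by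
    have := (Real.continuousAt_log hμ0.ne').tendsto.comp hμ
    refine this.congr (fun n => ?_)
    simp only [Function.comp]
    rw [Real.log_rpow (Kst.card_pos n)]
    ring
  have := Kst.det_lemma (fun n => ((Kst.S n).card : ℝ)) (Real.log μ) D
    (Real.log_pos (by linarith)) hD Kst.card_pos hl h
  have e : Real.exp (2 * Real.log μ) = μ ^ 2 := by
    rw [two_mul, Real.exp_add, Real.exp_log hμ0, sq]
  rw [← e]
  exact this
end

section
/- Let ℤ² denote the square lattice (vertex set ℤ × ℤ, with (a,b) adjacent to (c,d) if and only if |a − c| + |b − d| = 1), and let 𝕋 denote the triangular lattice (vertex set ℤ × ℤ, with (a,b) adjacent to (c,d) if and only if (c − a, d − b) ∈ {(1,0), (−1,0), (0,1), (0,−1), (1,1), (−1,−1)}). If σ_n((0,0))^{1/n} → μ as n → ∞ (counting SAWs in ℤ²) and σ'_n((0,0))^{1/n} → μ' as n → ∞ (counting SAWs in 𝕋), then μ < μ'. -/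
open Filter

/-- The triangular lattice `𝕋`: vertex set `ℤ × ℤ`, with `(a,b)` and `(c,d)` adjacent iff
`(c − a, d − b) ∈ {(1,0), (−1,0), (0,1), (0,−1), (1,1), (−1,−1)}`. -/
def triLattice : SimpleGraph (ℤ × ℤ) :=
  SimpleGraph.fromRel (fun x y =>
    (y.1 - x.1, y.2 - x.2) ∈
      ({(1, 0), (-1, 0), (0, 1), (0, -1), (1, 1), (-1, -1)} : Set (ℤ × ℤ)))

/-- lists of vertices following `v` along a self-avoiding walk -/
def SawList {V : Type*} (G : SimpleGraph V) (v : V) (n : ℕ) (l : List V) : Prop :=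
  l.length = n ∧ (v :: l).IsChain G.Adj ∧ (v :: l).Nodup

lemma sawList_cons {V : Type*} {G : SimpleGraph V} {v w : V} {n : ℕ} {l : List V} :
    SawList G v (n+1) (w :: l) ↔ G.Adj v w ∧ SawList G w n l ∧ v ≠ w ∧ v ∉ l := by
  simp only [SawList, List.length_cons, List.isChain_cons_cons, List.nodup_cons, List.mem_cons]
  constructor
  · rintro ⟨h1, ⟨h2, h3⟩, h4, h5⟩
    push Not at h4
    exact ⟨h2, ⟨by omega, h3, h5⟩, h4.1, h4.2⟩
  · rintro ⟨h1, ⟨h2, h3, h4⟩, h5, h6⟩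
    exact ⟨by omega, ⟨h1, h3⟩, by tauto, h4⟩

lemma saw_map_inj {V : Type*} (G : SimpleGraph V) (v : V) (n : ℕ) :
    Function.Injective (fun p : {p : Σ w : V, G.Walk v w // p.2.IsPath ∧ p.2.length = n} =>
      p.1.2.support) := by
  rintro ⟨⟨w, p⟩, hp⟩ ⟨⟨w', p'⟩, hp'⟩ h
  simp only at h
  have hw : w = w' := by
    have h1 := p.getLast_support
    have h2 := p'.getLast_support
    simp only [h] at h1
    exact h1.symm.trans h2
  subst hw
  have := SimpleGraph.Walk.ext_support h
  subst this
  rfl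

lemma saw_range {V : Type*} (G : SimpleGraph V) (v : V) (n : ℕ) (l : List V) :
    SawList G v n l ↔ ∃ p : {p : Σ w : V, G.Walk v w // p.2.IsPath ∧ p.2.length = n},
      p.1.2.support = v :: l := by
  constructor
  · rintro ⟨h1, h2, h3⟩
    refine ⟨⟨⟨_, SimpleGraph.Walk.ofSupport (v :: l) (by simp) h2⟩, ?_, ?_⟩, ?_⟩
    · rw [SimpleGraph.Walk.isPath_def]
      have := SimpleGraph.Walk.support_ofSupport (G := G) (l := v :: l) (by simp) h2
      exact (congrArg List.Nodup this).mpr h3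
    · have := SimpleGraph.Walk.length_ofSupport (G := G) (l := v :: l) (by simp) h2
      refine this.trans ?_
      simpa using h1
    · exact SimpleGraph.Walk.support_ofSupport _ _
  · rintro ⟨⟨⟨w, p⟩, hp, hn⟩, h⟩
    simp only at h hp hn
    refine ⟨?_, ?_, ?_⟩
    · have := p.length_support
      rw [h] at this
      simp at this; omega
    · rw [← h]; exact p.isChain_adj_support
    · rw [← h]; exact (SimpleGraph.Walk.isPath_def p).1 hp

lemma sawCount_eq {V : Type*} (G : SimpleGraph V) (v : V) (n : ℕ) :
    sawCount G v n = Set.ncard {l | SawList G v n l} := by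
  rw [sawCount, ← Nat.card_coe_set_eq]
  rw [Nat.card_congr (Equiv.ofInjective _ (saw_map_inj G v n))]
  refine Nat.card_congr (Equiv.symm (Equiv.ofBijective
    (fun l : {l | SawList G v n l} => ⟨v :: l.1, ?_⟩) ⟨?_, ?_⟩))
  · obtain ⟨p, hp⟩ := (saw_range G v n l.1).1 l.2
    exact ⟨p, hp⟩
  · intro a b h
    simpa [Subtype.ext_iff] using h
  · rintro ⟨_, p, rfl⟩
    refine ⟨⟨p.1.2.support.tail, (saw_range G v n _).2 ⟨p, ?_⟩⟩, ?_⟩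
    · simp
    · simp

/-- lower bound for number of walks in a region -/
def LB (R : ℤ × ℤ → ℤ × ℤ → Prop) (n : ℕ) (v : ℤ × ℤ) (c : ℝ) : Prop :=
  ∃ s : Finset (List (ℤ × ℤ)), (∀ l ∈ s, SawList triLattice v n l ∧ ∀ w ∈ l, R v w) ∧ c ≤ s.card

lemma LB_step {ι : Type} [Fintype ι] [DecidableEq ι] (R : ℤ × ℤ → ℤ × ℤ → Prop) (n : ℕ) (v : ℤ × ℤ)
    (w : ι → ℤ × ℤ) (hw : Function.Injective w) (R' : ι → ℤ × ℤ → ℤ × ℤ → Prop)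
    (c : ι → ℝ)
    (h : ∀ i, triLattice.Adj v (w i) ∧ LB (R' i) n (w i) (c i) ∧ R' i (w i) (w i) ∧
      ∀ u, R' i (w i) u → R v u ∧ u ≠ v) (C : ℝ) (hC : C ≤ ∑ i, c i) : LB R (n+1) v C := by
  choose h1 h2 h3 h4 using h
  choose s hs hc using h2
  refine ⟨(Finset.univ.sigma s).image (fun x => w x.1 :: x.2), ?_, ?_⟩
  · intro l hl
    simp only [Finset.mem_image, Finset.mem_sigma, Finset.mem_univ, true_and] at hl
    obtain ⟨⟨i, l'⟩, hl', rfl⟩ := hl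
    simp only at hl' ⊢
    obtain ⟨g1, g2⟩ := hs i l' hl'
    refine ⟨sawList_cons.2 ⟨h1 i, g1, ((h4 i _ (h3 i)).2).symm, fun hv => ?_⟩, ?_⟩
    · exact (h4 i _ (g2 v hv)).2 rfl
    · intro u hu
      rcases List.mem_cons.1 hu with rfl | hu
      · exact (h4 i _ (h3 i)).1
      · exact (h4 i _ (g2 u hu)).1
  · rw [Finset.card_image_of_injective, Finset.card_sigma]
    · push_cast
      exact hC.trans (Finset.sum_le_sum fun i _ => hc i)
    · rintro ⟨i, l⟩ ⟨j, l'⟩ h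
      simp only [List.cons.injEq] at h
      obtain ⟨h, rfl⟩ := h
      obtain rfl := hw h
      rfl

def RA (v w : ℤ × ℤ) : Prop := v.1 ≤ w.1
def RU (v w : ℤ × ℤ) : Prop := v.1 < w.1 ∨ (v.1 = w.1 ∧ v.2 ≤ w.2)
def RD (v w : ℤ × ℤ) : Prop := v.1 < w.1 ∨ (v.1 = w.1 ∧ w.2 ≤ v.2)

lemma LB_zero (R : ℤ × ℤ → ℤ × ℤ → Prop) (v : ℤ × ℤ) (c : ℝ) (hc : c ≤ 1) : LB R 0 v c := by
  refine ⟨{[]}, ?_, by simpa using hc⟩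
  simp [SawList]

lemma LB_all (n : ℕ) : ∀ v : ℤ × ℤ, LB RA n v ((7/2)^n) ∧ LB RU n v (3/4*(7/2)^n) ∧
    LB RD n v (3/4*(7/2)^n) := by
  induction n with
  | zero => intro v; refine ⟨LB_zero _ _ _ ?_, LB_zero _ _ _ ?_, LB_zero _ _ _ ?_⟩ <;> norm_num
  | succ n ih =>
    rintro ⟨a, b⟩
    have hp : (0:ℝ) < (7/2)^n := by positivity
    refine ⟨?_, ?_, ?_⟩
    · refine LB_step (ι := Fin 4) _ _ _ ![(a+1,b),(a+1,b+1),(a,b+1),(a,b-1)] ?_ ![RA,RA,RU,RD]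
        ![(7/2)^n,(7/2)^n,3/4*(7/2)^n,3/4*(7/2)^n] ?_ _ ?_
      · intro i j; fin_cases i <;> fin_cases j <;> simp <;> omega
      · intro i
        fin_cases i <;> simp [triLattice, ih, RA, RU, RD] <;> intros <;> try omega
        exact ⟨by omega, fun _ _ _ => by omega⟩
      · simp [Fin.sum_univ_four, pow_succ]; linarith
    · refine LB_step (ι := Fin 3) _ _ _ ![(a+1,b),(a+1,b+1),(a,b+1)] ?_ ![RA,RA,RU]
        ![(7/2)^n,(7/2)^n,3/4*(7/2)^n] ?_ _ ?_
      · intro i j; fin_cases i <;> fin_cases j <;> simp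
      · intro i
        fin_cases i <;> simp [triLattice, ih, RA, RU] <;> intros <;> omega
      · simp [Fin.sum_univ_three, pow_succ]; linarith
    · refine LB_step (ι := Fin 3) _ _ _ ![(a+1,b),(a+1,b+1),(a,b-1)] ?_ ![RA,RA,RD]
        ![(7/2)^n,(7/2)^n,3/4*(7/2)^n] ?_ _ ?_
      · intro i j; fin_cases i <;> fin_cases j <;> simp
      · intro i
        fin_cases i <;> simp [triLattice, ih, RA, RD] <;> intros <;> try omega
        exact ⟨by omega, fun _ _ _ => by omega⟩
      · simp [Fin.sum_univ_three, pow_succ]; linarith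

lemma saw_finite {V : Type*} (G : SimpleGraph V) (N : V → Finset V)
    (hN : ∀ v w, G.Adj v w → w ∈ N v) (n : ℕ) : ∀ v, {l | SawList G v n l}.Finite := by
  induction n with
  | zero =>
    intro v
    refine (Set.finite_singleton []).subset ?_
    rintro l ⟨h, -⟩
    simpa using h
  | succ n ih =>
    intro v
    refine Set.Finite.subset ((N v).finite_toSet.biUnion
      (fun w _ => (ih w).image (fun l => w :: l))) ?_
    intro l hl
    rcases l with _ | ⟨w, l⟩
    · simp [SawList] at hl
    · have := sawList_cons.1 hl
      simp only [Set.mem_iUnion]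
      exact ⟨w, hN v w this.1, l, this.2.1, rfl⟩

/-- generous neighbour set -/
def nbr (v : ℤ × ℤ) : Finset (ℤ × ℤ) :=
  {(v.1+1,v.2),(v.1-1,v.2),(v.1,v.2+1),(v.1,v.2-1),(v.1+1,v.2+1),(v.1-1,v.2-1)}

def nbrs (v : ℤ × ℤ) : Finset (ℤ × ℤ) :=
  {(v.1+1,v.2),(v.1-1,v.2),(v.1,v.2+1),(v.1,v.2-1)}

lemma adj_nbr (v w : ℤ × ℤ) (h : triLattice.Adj v w) : w ∈ nbr v := by
  obtain ⟨a, b⟩ := v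
  obtain ⟨c, d⟩ := w
  simp [triLattice] at h
  simp [nbr]
  omega

lemma adj_nbrs (v w : ℤ × ℤ) (h : squareLattice.Adj v w) : w ∈ nbrs v := by
  obtain ⟨a, b⟩ := v
  obtain ⟨c, d⟩ := w
  simp [squareLattice] at h
  simp [nbrs]
  have h1 := abs_cases (a - c)
  have h2 := abs_cases (b - d)
  have h3 := abs_cases (c - a)
  have h4 := abs_cases (d - b)
  omega

lemma card_nbrs (v : ℤ × ℤ) : (nbrs v).card ≤ 4 := Finset.card_le_four

lemma tri_lower (n : ℕ) : ((7:ℝ)/2)^n ≤ sawCount triLattice (0,0) n := by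
  obtain ⟨s, hs, hc⟩ := (LB_all n (0,0)).1
  rw [sawCount_eq]
  refine hc.trans ?_
  rw [← Set.ncard_coe_finset]
  exact_mod_cast Set.ncard_le_ncard (fun l hl => (hs l hl).1) (saw_finite _ nbr adj_nbr n _)

lemma cons_bound (N : Finset (ℤ × ℤ)) (s : ℤ × ℤ → Finset (List (ℤ × ℤ))) (c : ℕ)
    (hs : ∀ w ∈ N, (s w).card ≤ c) :
    (N.biUnion (fun w => (s w).image (fun l => w :: l))).card ≤ N.card * c :=
  Finset.card_biUnion_le_card_mul _ _ _ fun w hw => Finset.card_image_le.trans (hs w hw)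

lemma sq_upper_aux (n : ℕ) : ∀ v u : ℤ × ℤ, squareLattice.Adj u v →
    ∃ s : Finset (List (ℤ × ℤ)), s.card ≤ 3^n ∧
      ∀ l, SawList squareLattice v n l → u ∉ l → l ∈ s := by
  induction n with
  | zero =>
    intro v u _
    refine ⟨{[]}, by simp, ?_⟩
    rintro l ⟨h, -⟩ -
    simpa using h
  | succ n ih =>
    intro v u huv
    have : ∀ w, ∃ s : Finset (List (ℤ × ℤ)), s.card ≤ 3^n ∧ (squareLattice.Adj v w →
      ∀ l, SawList squareLattice w n l → v ∉ l → l ∈ s) := by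
      intro w
      by_cases h : squareLattice.Adj v w
      · obtain ⟨s, h1, h2⟩ := ih w v h
        exact ⟨s, h1, fun _ => h2⟩
      · exact ⟨∅, by simp, fun h' => absurd h' h⟩
    choose s hs1 hs2 using this
    refine ⟨_, (cons_bound ((nbrs v).erase u) s _ (fun w _ => hs1 w)).trans ?_, ?_⟩
    · have h1 : u ∈ nbrs v := adj_nbrs _ _ huv.symm
      have h2 := card_nbrs v
      rw [pow_succ, mul_comm]
      refine Nat.mul_le_mul_left _ ?_
      rw [Finset.card_erase_of_mem h1]
      omega
    · intro l hl hu
      rcases l with _ | ⟨w, l⟩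
      · simp [SawList] at hl
      · obtain ⟨g1, g2, g3, g4⟩ := sawList_cons.1 hl
        simp only [List.mem_cons, not_or] at hu
        refine Finset.mem_biUnion.2 ⟨w, Finset.mem_erase.2 ⟨Ne.symm hu.1, adj_nbrs _ _ g1⟩, ?_⟩
        exact Finset.mem_image.2 ⟨l, hs2 w g1 l g2 g4, rfl⟩

lemma sq_upper (n : ℕ) : (sawCount squareLattice (0,0) (n+1)) ≤ 4 * 3^n := by
  have : ∀ w, ∃ s : Finset (List (ℤ × ℤ)), s.card ≤ 3^n ∧ (squareLattice.Adj (0,0) w →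
      ∀ l, SawList squareLattice w n l → (0,0) ∉ l → l ∈ s) := by
    intro w
    by_cases h : squareLattice.Adj (0,0) w
    · obtain ⟨s, h1, h2⟩ := sq_upper_aux n w (0,0) h
      exact ⟨s, h1, fun _ => h2⟩
    · exact ⟨∅, by simp, fun h' => absurd h' h⟩
  choose s hs1 hs2 using this
  rw [sawCount_eq]
  refine le_trans ?_ ((cons_bound (nbrs (0,0)) s _ (fun w _ => hs1 w)).trans
    (Nat.mul_le_mul_right _ (card_nbrs _)))
  rw [← Set.ncard_coe_finset]
  refine Set.ncard_le_ncard ?_ (Finset.finite_toSet _)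
  intro l hl
  rcases l with _ | ⟨w, l⟩
  · simp [SawList] at hl
  · obtain ⟨g1, g2, g3, g4⟩ := sawList_cons.1 hl
    refine Finset.mem_coe.2 (Finset.mem_biUnion.2 ⟨w, adj_nbrs _ _ g1, ?_⟩)
    exact Finset.mem_image.2 ⟨l, hs2 w g1 l g2 g4, rfl⟩

/-- The connective constant of the square lattice is strictly smaller than that of the
triangular lattice. -/
theorem square_lt_triangular (μ μ' : ℝ)
    (hμ : Tendsto (fun n : ℕ => (sawCount squareLattice (0, 0) n : ℝ) ^ ((1 : ℝ) / n))
      atTop (nhds μ))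
    (hμ' : Tendsto (fun n : ℕ => (sawCount triLattice (0, 0) n : ℝ) ^ ((1 : ℝ) / n))
      atTop (nhds μ')) :
    μ < μ' := by
  have h1 : (7/2 : ℝ) ≤ μ' := by
    refine ge_of_tendsto hμ' ?_
    filter_upwards [eventually_ge_atTop 1] with n hn
    have hn0 : n ≠ 0 := by omega
    calc (7/2 : ℝ) = (((7:ℝ)/2)^n) ^ ((1:ℝ)/n) := by
          rw [one_div, Real.pow_rpow_inv_natCast (by norm_num) hn0]
      _ ≤ _ := Real.rpow_le_rpow (by positivity) (tri_lower n) (by positivity)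
  have h2 : μ ≤ 3 := by
    have hlim : Tendsto (fun n : ℕ => (4:ℝ) ^ ((1:ℝ)/n) * 3) atTop (nhds (4 ^ (0:ℝ) * 3)) := by
      refine Tendsto.mul_const _ ?_
      exact (Real.continuousAt_const_rpow (by norm_num)).tendsto.comp
        tendsto_one_div_atTop_nhds_zero_nat
    rw [Real.rpow_zero, one_mul] at hlim
    refine le_of_tendsto_of_tendsto hμ hlim ?_
    filter_upwards [eventually_ge_atTop 1] with n hn
    have hn0 : n ≠ 0 := by omega
    have hb : (sawCount squareLattice (0,0) n : ℝ) ≤ 4 * 3^n := by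
      obtain ⟨m, rfl⟩ := Nat.exists_eq_succ_of_ne_zero hn0
      have : sawCount squareLattice (0,0) (m+1) ≤ 4 * 3^(m+1) :=
        (sq_upper m).trans (Nat.mul_le_mul_left _ (Nat.pow_le_pow_right (by norm_num) (Nat.le_succ m)))
      exact_mod_cast this
    calc _ ≤ ((4:ℝ) * 3^n) ^ ((1:ℝ)/n) :=
          Real.rpow_le_rpow (by positivity) hb (by positivity)
      _ = _ := by
          rw [Real.mul_rpow (by norm_num) (by positivity)]
          congr 1
          rw [one_div, Real.pow_rpow_inv_natCast (by norm_num) hn0]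
  linarith
end
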